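/- arXiv:1103.6102 — 3 statements merged into one kernel-verified Lean document; each statement's English description precedes it below -/
import Mathlib

section
/- Let E = {ξ ∈ ℝ^{2×2} : (λ_1(ξ), λ_2(ξ)) ∈ Λ_E, det ξ > 0} where Λ_E = {(a_1, a_2), (b_1, b_2)} with 0 < a_1 < b_1 < a_2 < b_2, and set θ̲ = (−a_1 a_2 + b_1 b_2)/(b_1 + b_2 − a_1 − a_2). Then int Rco_f E = {ξ ∈ ℝ^{2×2} : (λ_1(ξ), λ_2(ξ)) ∈ rel int R(Λ_E), det ξ > 0}, where rel int R(Λ_E), the relative interior of R(Λ_E) with respect to {(x_1, x_2) ∈ ℝ² : 0 < x_1 ≤ x_2}, is the set of points (x_1, x_2) ∈ ℝ² such that: a_1 < x_1 ≤ x_2 < b_2; x_2 > a_1 a_2 / x_1; x_2 < (−a_1 a_2 + θ̲(a_1 + a_2) − θ̲ x_1)/(−x_1 + θ̲) whenever a_1 < x_1 < b_1; and x_2 < b_1 b_2 / x_1. -/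
open MeasureTheory Filter

attribute [local instance] Classical.propDecidable
attribute [local instance] Matrix.frobeniusNormedAddCommGroup Matrix.frobeniusNormedSpace

noncomputable section

/-- The space of real `N × n` matrices. -/
abbrev Mat (N n : ℕ) : Type := Matrix (Fin N) (Fin n) ℝ

/-- A function `f : ℝ^{N×n} → ℝ` is rank one convex. -/
def RankOneConvexFun {N n : ℕ} (f : Mat N n → ℝ) : Prop :=
  ∀ lam ∈ Set.Icc (0:ℝ) 1, ∀ ξ η : Mat N n, (ξ - η).rank = 1 →
    f (lam • ξ + (1 - lam) • η) ≤ lam * f ξ + (1 - lam) * f η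

/-- The hull `Rco_f E`. -/
def RcoF {N n : ℕ} (E : Set (Mat N n)) : Set (Mat N n) :=
  {ξ | ∀ f : Mat N n → ℝ, RankOneConvexFun f → (∀ η ∈ E, f η ≤ 0) → f ξ ≤ 0}

/-- A set of matrices is rank one convex. -/
def RankOneConvexSet {N n : ℕ} (S : Set (Mat N n)) : Prop :=
  ∀ A ∈ S, ∀ B ∈ S, (A - B).rank = 1 → ∀ t ∈ Set.Icc (0:ℝ) 1, t • A + (1 - t) • B ∈ S

/-- The property `(H_I(U))`, phrased on lists of (weight, matrix) pairs. -/
inductive HIProp {N n : ℕ} (U : Set (Mat N n)) : List (ℝ × Mat N n) → Prop where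
  | single (l : ℝ) (ξ : Mat N n) (hξ : ξ ∈ U) : HIProp U [(l, ξ)]
  | pair (l₁ l₂ : ℝ) (ξ₁ ξ₂ : Mat N n) (h₁ : ξ₁ ∈ U) (h₂ : ξ₂ ∈ U)
      (hrank : (ξ₁ - ξ₂).rank = 1) : HIProp U [(l₁, ξ₁), (l₂, ξ₂)]
  | step (L rest : List (ℝ × Mat N n)) (l₁ l₂ : ℝ) (ξ₁ ξ₂ : Mat N n)
      (hperm : L.Perm ((l₁, ξ₁) :: (l₂, ξ₂) :: rest)) (hrest : rest ≠ [])
      (h₁ : ξ₁ ∈ U) (h₂ : ξ₂ ∈ U) (hrank : (ξ₁ - ξ₂).rank = 1)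
      (hrec : HIProp U ((l₁ + l₂, ((l₁ + l₂)⁻¹) • (l₁ • ξ₁ + l₂ • ξ₂)) :: rest)) :
      HIProp U L

/-- The family `(λ_i, ξ_i)_{1 ≤ i ≤ I}` satisfies `(H_I(U))`. -/
def SatisfiesH {N n : ℕ} (U : Set (Mat N n)) (I : ℕ) (l : Fin I → ℝ)
    (ξ : Fin I → Mat N n) : Prop :=
  HIProp U (List.ofFn fun i => (l i, ξ i))

/-- The gradient of a map `u : ℝ^n → ℝ^N`, as an `N × n` matrix. -/
def matGrad {N n : ℕ} (u : (Fin n → ℝ) → Fin N → ℝ) (x : Fin n → ℝ) : Mat N n :=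
  LinearMap.toMatrix' (fderiv ℝ u x).toLinearMap

/-- `u` is affine on the set `s`. -/
def AffineOn {N n : ℕ} (u : (Fin n → ℝ) → Fin N → ℝ) (s : Set (Fin n → ℝ)) : Prop :=
  ∃ (A : Mat N n) (b : Fin N → ℝ), ∀ x ∈ s, u x = A.mulVec x + b

/-- `u` is piecewise affine on the open set `Ω`. -/
def PiecewiseAffineOn {N n : ℕ} (u : (Fin n → ℝ) → Fin N → ℝ)
    (Ω : Set (Fin n → ℝ)) : Prop :=
  ContinuousOn u (closure Ω) ∧
  ∃ P : ℕ → Set (Fin n → ℝ),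
    (∀ k, IsOpen (P k)) ∧ (∀ k, P k ⊆ Ω) ∧
    (∀ k l, k ≠ l → Disjoint (P k) (P l)) ∧
    volume (Ω \ ⋃ k, P k) = 0 ∧ ∀ k, AffineOn u (P k)

/-- `u` is piecewise `C¹` on the open set `Ω`. -/
def PiecewiseC1On {N n : ℕ} (u : (Fin n → ℝ) → Fin N → ℝ)
    (Ω : Set (Fin n → ℝ)) : Prop :=
  ContinuousOn u (closure Ω) ∧
  ∃ P : ℕ → Set (Fin n → ℝ),
    (∀ k, IsOpen (P k)) ∧ (∀ k, P k ⊆ Ω) ∧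
    (∀ k l, k ≠ l → Disjoint (P k) (P l)) ∧
    volume (Ω \ ⋃ k, P k) = 0 ∧ ∀ k, ContDiffOn ℝ 1 u (P k)

/-- `u ∈ φ + W₀^{1,∞}(Ω; ℝ^N)`: `u` is Lipschitz on `closure Ω` and agrees with `φ`
on the boundary of `Ω`. -/
def MemW01inf {N n : ℕ} (Ω : Set (Fin n → ℝ)) (φ u : (Fin n → ℝ) → Fin N → ℝ) : Prop :=
  (∃ C : NNReal, LipschitzOnWith C u (closure Ω)) ∧ ∀ x ∈ frontier Ω, u x = φ x

/-- `K` has the relaxation property with respect to `E`. -/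
def HasRelaxationProperty {N n : ℕ} (K E : Set (Mat N n)) : Prop :=
  ∀ Ω : Set (Fin n → ℝ), IsOpen Ω → Bornology.IsBounded Ω →
    ∀ ξ ∈ K, ∀ b : Fin N → ℝ,
      ∃ u : ℕ → (Fin n → ℝ) → Fin N → ℝ,
        (∀ ν, PiecewiseAffineOn (u ν) Ω) ∧
        (∀ ν, MemW01inf Ω (fun x => ξ.mulVec x + b) (u ν)) ∧
        (∀ ν, ∀ᵐ x ∂(volume.restrict Ω), matGrad (u ν) x ∈ E ∪ K) ∧
        (∃ C : NNReal, ∀ ν, LipschitzOnWith C (u ν) (closure Ω)) ∧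
        TendstoUniformlyOn u (fun x => ξ.mulVec x + b) atTop (closure Ω) ∧
        Tendsto (fun ν => ∫ x in Ω, Metric.infDist (matGrad (u ν) x) E) atTop (nhds 0)

/-- The singular values of a square matrix, in nondecreasing order:
the square roots of the eigenvalues of `ξ ξᵀ`, sorted. -/
def singularValues {n : ℕ} (ξ : Matrix (Fin n) (Fin n) ℝ) (i : Fin n) : ℝ :=
  Real.sqrt ((Matrix.isHermitian_mul_conjTranspose_self ξ).eigenvalues
    (Tuple.sort (Matrix.isHermitian_mul_conjTranspose_self ξ).eigenvalues i))

end

section Statements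

open Metric Set

lemma sv_facts (ξ : Mat 2 2) (hd : 0 < ξ.det) :
    0 < singularValues ξ 0 ∧ singularValues ξ 0 ≤ singularValues ξ 1 ∧
    singularValues ξ 0 * singularValues ξ 1 = ξ.det ∧
    singularValues ξ 0 + singularValues ξ 1
      = Real.sqrt ((ξ 0 0 + ξ 1 1)^2 + (ξ 0 1 - ξ 1 0)^2) := by
  have hH := Matrix.isHermitian_mul_conjTranspose_self ξ
  have hpos : ∀ i, 0 ≤ hH.eigenvalues i :=
    (Matrix.posSemidef_self_mul_conjTranspose ξ).eigenvalues_nonneg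
  have htr := hH.trace_eq_sum_eigenvalues
  have hdet := hH.det_eq_prod_eigenvalues
  have hmono : hH.eigenvalues (Tuple.sort hH.eigenvalues 0)
      ≤ hH.eigenvalues (Tuple.sort hH.eigenvalues 1) :=
    Tuple.monotone_sort hH.eigenvalues (by decide : (0 : Fin 2) ≤ 1)
  rw [← Equiv.sum_comp (Tuple.sort hH.eigenvalues)] at htr
  rw [← Equiv.prod_comp (Tuple.sort hH.eigenvalues)] at hdet
  have h0 := hpos (Tuple.sort hH.eigenvalues 0)
  have h1 := hpos (Tuple.sort hH.eigenvalues 1)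
  have e0 : singularValues ξ 0 = Real.sqrt (hH.eigenvalues (Tuple.sort hH.eigenvalues 0)) := rfl
  have e1 : singularValues ξ 1 = Real.sqrt (hH.eigenvalues (Tuple.sort hH.eigenvalues 1)) := rfl
  rw [e0, e1]
  simp only [Fin.sum_univ_two, Fin.prod_univ_two] at htr hdet
  clear e0 e1 hpos
  generalize hH.eigenvalues (Tuple.sort hH.eigenvalues 0) = x at *
  generalize hH.eigenvalues (Tuple.sort hH.eigenvalues 1) = y at *
  simp only [Matrix.det_mul, Matrix.conjTranspose_eq_transpose_of_trivial, Matrix.det_transpose,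
    Matrix.trace_fin_two, Matrix.mul_apply, Fin.sum_univ_two, Matrix.transpose_apply] at htr hdet
  have hdet' : ξ.det * ξ.det = x * y := by simpa using hdet
  have htr' : ξ 0 0 * ξ 0 0 + ξ 0 1 * ξ 0 1 + (ξ 1 0 * ξ 1 0 + ξ 1 1 * ξ 1 1) = x + y := by
    simpa using htr
  have hp : Real.sqrt x * Real.sqrt y = ξ.det := by
    rw [← Real.sqrt_mul h0, ← hdet', Real.sqrt_mul_self hd.le]
  have hx : 0 < x := by
    rcases h0.lt_or_eq with h | h
    · exact h
    · rw [← h] at hdet'; nlinarith [mul_pos hd hd]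
  refine ⟨Real.sqrt_pos.2 hx, Real.sqrt_le_sqrt hmono, hp, ?_⟩
  symm
  rw [Real.sqrt_eq_iff_mul_self_eq (by positivity) (by positivity)]
  have sx := Real.mul_self_sqrt h0
  have sy := Real.mul_self_sqrt h1
  rw [Matrix.det_fin_two] at hp
  nlinarith

lemma rank_one_of {M : Mat 2 2} (h0 : M ≠ 0) (hd : M.det = 0) : M.rank = 1 := by
  have h1 : M.rank ≠ 0 := by
    intro h
    rw [Matrix.rank, Submodule.finrank_eq_zero, LinearMap.range_eq_bot] at h
    apply h0
    ext i j
    have := congrFun (LinearMap.congr_fun h (Pi.single j 1)) i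
    simpa using this
  have h2 : M.rank ≤ 2 := by simpa using Matrix.rank_le_width M
  have h3 : M.rank ≠ 2 := by
    intro h
    have : IsUnit M := by
      rw [← Matrix.linearIndependent_rows_iff_isUnit, linearIndependent_iff_card_eq_finrank_span,
        Set.finrank, ← Matrix.rank_eq_finrank_span_row]
      simp [h]
    rw [Matrix.isUnit_iff_isUnit_det, hd] at this
    simp at this
  omega

lemma det_zero_of {M : Mat 2 2} (h : M.rank = 1) : M.det = 0 := by
  by_contra hd
  have : IsUnit M := (Matrix.isUnit_iff_isUnit_det M).2 (isUnit_iff_ne_zero.2 hd)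
  have := Matrix.rank_of_isUnit M this
  simp at this
  omega

lemma rco_seg {E : Set (Mat 2 2)} {A B : Mat 2 2} (hA : A ∈ RcoF E) (hB : B ∈ RcoF E)
    (hd : (A - B).det = 0) (t : ℝ) (ht : t ∈ Set.Icc (0:ℝ) 1) :
    t • A + (1 - t) • B ∈ RcoF E := by
  by_cases h : A = B
  · subst h
    rwa [← add_smul, add_sub_cancel, one_smul]
  intro f hf hfE
  have h1 := hf t ht A B (rank_one_of (sub_ne_zero.2 h) hd)
  have := hA f hf hfE
  have := hB f hf hfE
  nlinarith [ht.1, ht.2]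

/-- Three points on a rank one line. -/
lemma rco_line {E : Set (Mat 2 2)} {X M : Mat 2 2} {s t : ℝ} (hM : M.det = 0)
    (hs : s ≤ 0) (ht : 0 ≤ t) (hA : X + s • M ∈ RcoF E) (hB : X + t • M ∈ RcoF E) :
    X ∈ RcoF E := by
  rcases eq_or_lt_of_le hs with h | h
  · subst h; simpa using hA
  have hst : 0 < t - s := by linarith
  have := rco_seg hA hB (by
    rw [show X + s • M - (X + t • M) = (s - t) • M by rw [sub_smul]; abel,
      Matrix.det_smul, hM, mul_zero]) (t / (t - s))
      ⟨by positivity, by rw [div_le_one hst]; linarith⟩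
  convert this using 1
  ext i j
  simp only [Matrix.add_apply, Matrix.smul_apply, smul_eq_mul]
  field_simp
  ring

lemma det_comb (ξ η : Mat 2 2) (h : (ξ - η).det = 0) (l : ℝ) :
    (l • ξ + (1 - l) • η).det = l * ξ.det + (1 - l) * η.det := by
  simp only [Matrix.det_fin_two, Matrix.add_apply, Matrix.sub_apply, Matrix.smul_apply,
    smul_eq_mul] at *
  linear_combination (- l * (1 - l)) * h

/-- Nuclear norm for positive determinant. -/
noncomputable def nuc (ξ : Mat 2 2) : ℝ := Real.sqrt ((ξ 0 0 + ξ 1 1)^2 + (ξ 0 1 - ξ 1 0)^2)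

lemma nuc_eq (ξ : Mat 2 2) : nuc ξ = ‖(⟨ξ 0 0 + ξ 1 1, ξ 0 1 - ξ 1 0⟩ : ℂ)‖ := by
  rw [Complex.norm_eq_sqrt_sq_add_sq, nuc]

lemma nuc_conv (ξ η : Mat 2 2) (l : ℝ) (hl : l ∈ Set.Icc (0:ℝ) 1) :
    nuc (l • ξ + (1 - l) • η) ≤ l * nuc ξ + (1 - l) * nuc η := by
  simp only [nuc_eq]
  have h0 := hl.1
  have h1 : 0 ≤ 1 - l := by linarith [hl.2]
  set z : ℂ := ⟨ξ 0 0 + ξ 1 1, ξ 0 1 - ξ 1 0⟩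
  set w : ℂ := ⟨η 0 0 + η 1 1, η 0 1 - η 1 0⟩
  calc _ = ‖l • z + (1 - l) • w‖ := by
        congr 1
        apply Complex.ext <;> simp [z, w] <;> ring
    _ ≤ ‖l • z‖ + ‖(1 - l) • w‖ := norm_add_le _ _
    _ = _ := by rw [norm_smul, norm_smul, Real.norm_of_nonneg h0, Real.norm_of_nonneg h1]

lemma rco_sub {E : Set (Mat 2 2)} {m M θ c : ℝ} (hθ : 0 ≤ θ)
    (h : ∀ ξ ∈ E, m ≤ ξ.det ∧ ξ.det ≤ M ∧ θ * nuc ξ - ξ.det ≤ c) :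
    ∀ ξ ∈ RcoF E, m ≤ ξ.det ∧ ξ.det ≤ M ∧ θ * nuc ξ - ξ.det ≤ c := by
  intro ξ hξ
  refine ⟨?_, ?_, ?_⟩
  · have := hξ (fun η => m - η.det) (by
      intro l _ A B hr
      have := det_comb A B (det_zero_of hr) l
      simp only [this]; linarith) (fun η hη => by have := (h η hη).1; linarith)
    linarith
  · have := hξ (fun η => η.det - M) (by
      intro l _ A B hr
      have := det_comb A B (det_zero_of hr) l
      simp only [this]; linarith) (fun η hη => by have := (h η hη).2.1; linarith)
    linarith
  · have := hξ (fun η => θ * nuc η - η.det - c) (by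
      intro l hl A B hr
      have := det_comb A B (det_zero_of hr) l
      have h2 := mul_le_mul_of_nonneg_left (nuc_conv A B l hl) hθ
      simp only [this]; linarith) (fun η hη => by have := (h η hη).2.2; linarith)
    linarith

/-- Points on the upper boundary are in the hull. -/
lemma rco_upper {E : Set (Mat 2 2)} {ta da tb db θ c : ℝ} (hta : 0 < ta)
    (hA : ∀ ξ : Mat 2 2, nuc ξ = ta → ξ.det = da → ξ ∈ RcoF E)
    (hB : ∀ ξ : Mat 2 2, nuc ξ = tb → ξ.det = db → ξ ∈ RcoF E)
    (hca : θ * ta - da = c) (hcb : θ * tb - db = c) (hc : θ ^ 2 ≤ c)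
    (ξ : Mat 2 2) (h1 : ta ≤ nuc ξ) (h2 : nuc ξ ≤ tb) (h3 : θ * nuc ξ - ξ.det = c) :
    ξ ∈ RcoF E := by
  set T := nuc ξ with hT
  have hTp : 0 < T := by linarith
  have hT2 : T ^ 2 = (ξ 0 0 + ξ 1 1)^2 + (ξ 0 1 - ξ 1 0)^2 := by
    rw [hT, nuc, Real.sq_sqrt (by positivity)]
  obtain ⟨C, hC⟩ : ∃ C, C = (ξ 0 0 + ξ 1 1) / T := ⟨_, rfl⟩
  obtain ⟨S, hS⟩ : ∃ S, S = (ξ 1 0 - ξ 0 1) / T := ⟨_, rfl⟩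
  have hCS : C ^ 2 + S ^ 2 = 1 := by
    rw [hC, hS]; field_simp; linarith
  have hC' : ξ 0 0 + ξ 1 1 = C * T := by rw [hC]; field_simp
  have hS' : ξ 1 0 - ξ 0 1 = S * T := by rw [hS]; field_simp
  -- symmetric part `Rᵀ ξ = [[p,q],[q,r]]`
  obtain ⟨p, hp⟩ : ∃ p, p = C * ξ 0 0 + S * ξ 1 0 := ⟨_, rfl⟩
  obtain ⟨q, hq⟩ : ∃ q, q = C * ξ 0 1 + S * ξ 1 1 := ⟨_, rfl⟩
  obtain ⟨r, hr⟩ : ∃ r, r = C * ξ 1 1 - S * ξ 0 1 := ⟨_, rfl⟩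
  have hq' : q = C * ξ 1 0 - S * ξ 0 0 := by
    rw [hq]; linear_combination (-C) * hS' + S * hC'
  have hpr : p + r = T := by
    rw [hp, hr]; linear_combination C * hC' + S * hS' + T * hCS
  have hdet : p * r - q ^ 2 = ξ.det := by
    rw [Matrix.det_fin_two]
    have : q ^ 2 = q * q := sq q
    rw [this]; nth_rewrite 1 [hq]; rw [hq', hp, hr]
    linear_combination (ξ 0 0 * ξ 1 1 - ξ 0 1 * ξ 1 0) * hCS
  have hdisc : 0 ≤ q ^ 2 - (r - θ) * (p - θ) := by
    have : q ^ 2 - (r - θ) * (p - θ) = c - θ ^ 2 := by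
      linear_combination (-1) * hdet + θ * hpr + h3
    linarith
  obtain ⟨u, v, huv, hiso⟩ : ∃ u v : ℝ, u ^ 2 + v ^ 2 = 1 ∧
      r * u ^ 2 - 2 * q * u * v + p * v ^ 2 = θ := by
    obtain ⟨u, v, hn, hiso⟩ : ∃ u v : ℝ, 0 < u ^ 2 + v ^ 2 ∧
        (r - θ) * u ^ 2 - 2 * q * u * v + (p - θ) * v ^ 2 = 0 := by
      by_cases hrt : r - θ = 0
      · exact ⟨1, 0, by norm_num, by rw [hrt]; ring⟩
      · refine ⟨(q + Real.sqrt (q ^ 2 - (r - θ) * (p - θ))) / (r - θ), 1, by positivity, ?_⟩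
        have := Real.sq_sqrt hdisc
        field_simp
        linear_combination this
    have hnn := Real.sq_sqrt hn.le
    have hn0 := Real.sqrt_pos.2 hn
    set n := Real.sqrt (u ^ 2 + v ^ 2)
    refine ⟨u / n, v / n, ?_, ?_⟩
    · field_simp; linarith
    · field_simp; rw [hnn]; linarith
  -- the rank one direction
  let M : Mat 2 2 := !![(C * u - S * v) * u, (C * u - S * v) * v;
    (S * u + C * v) * u, (S * u + C * v) * v]
  have hM : M.det = 0 := by simp [M, Matrix.det_fin_two]; ring
  have hx00 : ξ 0 0 = C * p - S * q := by
    rw [hp, hq']; linear_combination (-ξ 0 0) * hCS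
  have hx01 : ξ 0 1 = C * q - S * r := by
    rw [hq, hr]; linear_combination (-ξ 0 1) * hCS
  have hx10 : ξ 1 0 = S * p + C * q := by
    rw [hp, hq']; linear_combination (-ξ 1 0) * hCS
  have hx11 : ξ 1 1 = S * q + C * r := by
    rw [hq, hr]; linear_combination (-ξ 1 1) * hCS
  have hdetM : ∀ t : ℝ, (ξ + t • M).det = ξ.det + θ * t := by
    intro t
    rw [← hdet]
    simp only [M, Matrix.det_fin_two, Matrix.add_apply, Matrix.smul_apply, smul_eq_mul, hx00, hx01,
      hx10, hx11, Matrix.of_apply, Matrix.cons_val', Matrix.cons_val_zero, Matrix.cons_val_one,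
      Matrix.cons_val_fin_one]
    linear_combination (p * r - q ^ 2 + t * (r * u ^ 2 - 2 * q * u * v + p * v ^ 2)) * hCS
      + t * hiso
  have hnucM : ∀ t : ℝ, 0 ≤ T + t → nuc (ξ + t • M) = T + t := by
    intro t ht
    rw [nuc, Real.sqrt_eq_iff_mul_self_eq (by positivity) ht]
    simp only [M, Matrix.add_apply, Matrix.smul_apply, smul_eq_mul, hx00, hx01,
      hx10, hx11, Matrix.of_apply, Matrix.cons_val', Matrix.cons_val_zero, Matrix.cons_val_one,
      Matrix.cons_val_fin_one]
    have e1 : C * p - S * q + t * ((C * u - S * v) * u) + (S * q + C * r + t * ((S * u + C * v) * v))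
      = C * (T + t) := by linear_combination C * hpr + C * t * huv
    have e2 : C * q - S * r + t * ((C * u - S * v) * v) - (S * p + C * q + t * ((S * u + C * v) * u))
      = - S * (T + t) := by linear_combination (-S) * hpr - S * t * huv
    rw [e1, e2]
    linear_combination ((T + t) ^ 2) * hCS
  refine rco_line (s := ta - T) (t := tb - T) hM (by linarith) (by linarith) ?_ ?_
  · apply hA
    · rw [hnucM _ (by linarith)]; ring
    · rw [hdetM]; linarith
  · apply hB
    · rw [hnucM _ (by linarith)]; ring
    · rw [hdetM]; linarith

/-- Moving along lines of constant determinant. -/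
lemma rco_inner {E : Set (Mat 2 2)} {T : ℝ} (ξ : Mat 2 2) (hd : 0 < ξ.det) (hT : nuc ξ ≤ T)
    (h : ∀ η : Mat 2 2, η.det = ξ.det → nuc η = T → η ∈ RcoF E) : ξ ∈ RcoF E := by
  have hn : 0 ≤ nuc ξ := Real.sqrt_nonneg _
  have hT2 : (nuc ξ) ^ 2 = (ξ 0 0 + ξ 1 1)^2 + (ξ 0 1 - ξ 1 0)^2 := by
    rw [nuc, Real.sq_sqrt (by positivity)]
  let M : Mat 2 2 := !![ξ 1 0, ξ 1 1; 0, 0]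
  have hM : M.det = 0 := by simp [M, Matrix.det_fin_two]
  rw [Matrix.det_fin_two] at hd
  have hA : 0 < (ξ 1 0)^2 + (ξ 1 1)^2 := by
    by_contra hcon
    have h1 : ξ 1 0 = 0 := by nlinarith [sq_nonneg (ξ 1 0), sq_nonneg (ξ 1 1)]
    have h2 : ξ 1 1 = 0 := by nlinarith [sq_nonneg (ξ 1 0), sq_nonneg (ξ 1 1)]
    rw [h1, h2] at hd; simp at hd
  obtain ⟨A, hAe⟩ : ∃ A, A = (ξ 1 0)^2 + (ξ 1 1)^2 := ⟨_, rfl⟩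
  rw [← hAe] at hA
  obtain ⟨B, hBe⟩ : ∃ B, B = (ξ 0 0 + ξ 1 1) * ξ 1 0 + (ξ 0 1 - ξ 1 0) * ξ 1 1 := ⟨_, rfl⟩
  obtain ⟨D, hDe⟩ : ∃ D, D = T ^ 2 - nuc ξ ^ 2 := ⟨_, rfl⟩
  have hD : 0 ≤ D := by rw [hDe]; nlinarith
  have hdisc : 0 ≤ B ^ 2 + A * D := by positivity
  have hs := Real.sq_sqrt hdisc
  have hs0 := Real.sqrt_nonneg (B ^ 2 + A * D)
  have hsB : |B| ≤ Real.sqrt (B ^ 2 + A * D) := by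
    apply Real.abs_le_sqrt; nlinarith [mul_nonneg hA.le hD]
  obtain ⟨hb1, hb2⟩ := abs_le.1 hsB
  set R := Real.sqrt (B ^ 2 + A * D)
  have key : ∀ t : ℝ, A * t ^ 2 + 2 * B * t = D → ξ + t • M ∈ RcoF E := by
    intro t ht
    apply h
    · simp [M, Matrix.det_fin_two]; ring
    · rw [nuc, Real.sqrt_eq_iff_mul_self_eq (by positivity) (by linarith)]
      simp [M]
      rw [hDe, hT2, hAe, hBe] at ht
      linear_combination ht
  refine rco_line (s := (-B - R) / A) (t := (-B + R) / A) hM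
    (div_nonpos_of_nonpos_of_nonneg (by linarith) hA.le) (div_nonneg (by linarith) hA.le)
    (key _ ?_) (key _ ?_)
  · field_simp; linear_combination hs
  · field_simp; linear_combination hs

lemma relint_iff {a₁ a₂ b₁ b₂ θ x y : ℝ} (ha₁ : 0 < a₁) (hab : a₁ < b₁) (hba : b₁ < a₂)
    (hb₂ : a₂ < b₂) (hθ1 : b₁ < θ) (hθ2 : θ < a₂)
    (hθ : θ * (a₁ + a₂) - a₁ * a₂ = θ * (b₁ + b₂) - b₁ * b₂) (hx : 0 < x) (hxy : x ≤ y) :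
    (a₁ < x ∧ x ≤ y ∧ y < b₂ ∧ a₁ * a₂ / x < y ∧
      (a₁ < x → x < b₁ → y < (-(a₁*a₂) + θ*(a₁+a₂) - θ*x) / (-x + θ)) ∧ y < b₁ * b₂ / x) ↔
    (a₁ * a₂ < x * y ∧ x * y < b₁ * b₂ ∧ θ * (x + y) - x * y < θ * (a₁ + a₂) - a₁ * a₂) := by
  rw [div_lt_iff₀ hx, lt_div_iff₀ hx]
  constructor
  · rintro ⟨h1, h2, h3, h4, h5, h6⟩
    refine ⟨by linarith, by linarith, ?_⟩
    by_cases hxb : x < b₁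
    · have := h5 h1 hxb
      rw [lt_div_iff₀ (by linarith)] at this
      nlinarith
    · push Not at hxb
      -- (θ-x)(y-θ) < (θ-b₁)(b₂-θ)
      have hR : 0 < (θ - b₁) * (b₂ - θ) := mul_pos (by linarith) (by linarith)
      suffices h : (θ - x) * (y - θ) < (θ - b₁) * (b₂ - θ) by nlinarith
      by_cases hxt : x < θ
      · by_cases hyt : θ < y
        · calc (θ - x) * (y - θ) ≤ (θ - b₁) * (y - θ) :=
                mul_le_mul_of_nonneg_right (by linarith) (by linarith)
            _ < _ := mul_lt_mul_of_pos_left (by linarith) (by linarith)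
        · have : (θ - x) * (y - θ) ≤ 0 :=
            mul_nonpos_of_nonneg_of_nonpos (by linarith) (by linarith)
          linarith
      · have : (θ - x) * (y - θ) ≤ 0 :=
          mul_nonpos_of_nonpos_of_nonneg (by linarith) (by linarith)
        linarith
  · rintro ⟨h1, h2, h3⟩
    have hax : a₁ < x := by
      by_contra hcon
      push Not at hcon
      have hy : a₂ < y := by
        by_contra hy; push Not at hy
        have : x * y ≤ a₁ * a₂ := mul_le_mul hcon hy (by linarith) ha₁.le
        linarith
      have : (θ - a₁) * (a₂ - θ) ≤ (θ - x) * (y - θ) :=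
        mul_le_mul (by linarith) (by linarith) (by linarith) (by linarith)
      nlinarith
    have hyb : y < b₂ := by
      by_contra hcon
      push Not at hcon
      have hy : x < b₁ := by
        by_contra hy; push Not at hy
        have : b₁ * b₂ ≤ x * y := mul_le_mul hy hcon (by linarith) (by linarith)
        linarith
      have : (θ - b₁) * (b₂ - θ) ≤ (θ - x) * (y - θ) :=
        mul_le_mul (by linarith) (by linarith) (by linarith) (by linarith)
      nlinarith
    refine ⟨hax, hxy, hyb, by linarith, fun _ hxb => ?_, by linarith⟩
    rw [lt_div_iff₀ (by linarith)]
    nlinarith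

lemma pair_iff {x y p q : ℝ} (hxy : x ≤ y) (hpq : p ≤ q) :
    (x, y) = (p, q) ↔ x + y = p + q ∧ x * y = p * q := by
  rw [Prod.mk.injEq]
  constructor
  · rintro ⟨rfl, rfl⟩; exact ⟨rfl, rfl⟩
  · rintro ⟨h1, h2⟩
    have h3 : (y - x) ^ 2 = (q - p) ^ 2 := by
      linear_combination (x + y + p + q) * h1 - 4 * h2
    have h4 : y - x = q - p := by
      rwa [sq_eq_sq₀ (by linarith) (by linarith)] at h3
    constructor <;> linarith

lemma cont_entry (i j : Fin 2) : Continuous (fun ξ : Mat 2 2 => ξ i j) :=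
  continuous_id.matrix_elem i j

lemma cont_det : Continuous (fun ξ : Mat 2 2 => ξ.det) := continuous_id.matrix_det

lemma cont_nuc : Continuous nuc := by
  have := cont_entry 0 0
  have := cont_entry 0 1
  have := cont_entry 1 0
  have := cont_entry 1 1
  unfold nuc
  fun_prop

lemma interior_path {K : Set (Mat 2 2)} {ξ : Mat 2 2} (h : ξ ∈ interior K) (M : Mat 2 2) :
    ∃ t : ℝ, 0 < t ∧ t < 1 ∧ ξ + t • M ∈ K ∧ ξ + (-t) • M ∈ K := by
  have hc : ∀ N : Mat 2 2, Continuous (fun t : ℝ => ξ + t • N) := fun N => by fun_prop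
  have hU : ∀ N : Mat 2 2, ∀ᶠ t in nhds (0:ℝ), ξ + t • N ∈ K := fun N => by
    have h1 : (fun t : ℝ => ξ + t • N) ⁻¹' (interior K) ∈ nhds (0:ℝ) :=
      (isOpen_interior.preimage (hc N)).mem_nhds (by simpa using h)
    filter_upwards [h1] with t ht using interior_subset ht
  have h2 : ∀ᶠ t in nhdsWithin (0:ℝ) (Set.Ioi 0), 0 < t ∧ t < 1 ∧ ξ + t • M ∈ K ∧ ξ + t • (-M) ∈ K := by
    filter_upwards [self_mem_nhdsWithin, nhdsWithin_le_nhds (hU M), nhdsWithin_le_nhds (hU (-M)),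
      nhdsWithin_le_nhds (Iio_mem_nhds (by norm_num : (0:ℝ) < 1))] with t h1 h2 h3 h4
    exact ⟨h1, h4, h2, h3⟩
  obtain ⟨t, h1, h2, h3, h4⟩ := h2.exists
  exact ⟨t, h1, h2, h3, by simpa using h4⟩

lemma interior_strict {K : Set (Mat 2 2)} {m M θ c : ℝ} (hm : 0 < m)
    (h : ∀ ξ ∈ K, m ≤ ξ.det ∧ ξ.det ≤ M ∧ θ * nuc ξ - ξ.det ≤ c) {ξ : Mat 2 2}
    (hξ : ξ ∈ interior K) : m < ξ.det ∧ ξ.det < M ∧ θ * nuc ξ - ξ.det < c := by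
  have h0 := h ξ (interior_subset hξ)
  have hd : 0 < ξ.det := by linarith [h0.1]
  obtain ⟨t, ht0, ht1, hp, hn⟩ := interior_path hξ ξ
  have e : ∀ s : ℝ, (ξ + s • ξ).det = (1 + s) ^ 2 * ξ.det := by
    intro s; simp [Matrix.det_fin_two]; ring
  have hp := (h _ hp).2.1
  have hn := (h _ hn).1
  rw [e] at hp hn
  refine ⟨?_, ?_, ?_⟩
  · nlinarith [mul_pos ht0 hd, mul_pos (mul_pos ht0 hd) (by linarith : 0 < 1 - t)]
  · nlinarith [mul_pos ht0 hd, mul_pos (mul_pos ht0 hd) ht0]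
  · obtain ⟨u, v, huv⟩ : ∃ u v : ℝ, 0 < u ^ 2 + v ^ 2 ∧
        0 ≤ (ξ 0 0 - ξ 1 1) * u + (ξ 0 1 + ξ 1 0) * v := by
      by_cases hz : 0 < (ξ 0 0 - ξ 1 1) ^ 2 + (ξ 0 1 + ξ 1 0) ^ 2
      · exact ⟨_, _, hz, by nlinarith⟩
      · have h1 : ξ 0 0 - ξ 1 1 = 0 := by
          nlinarith [sq_nonneg (ξ 0 0 - ξ 1 1), sq_nonneg (ξ 0 1 + ξ 1 0)]
        have h2 : ξ 0 1 + ξ 1 0 = 0 := by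
          nlinarith [sq_nonneg (ξ 0 0 - ξ 1 1), sq_nonneg (ξ 0 1 + ξ 1 0)]
        exact ⟨1, 0, by norm_num, by rw [h1, h2]; simp⟩
    obtain ⟨t, ht0, ht1, hp, -⟩ := interior_path hξ !![u, v; v, -u]
    have hp := (h _ hp).2.2
    have e1 : nuc (ξ + t • !![u, v; v, -u]) = nuc ξ := by
      simp only [nuc]; congr 1; simp; ring
    have e2 : (ξ + t • !![u, v; v, -u]).det
        = ξ.det - t * ((ξ 0 0 - ξ 1 1) * u + (ξ 0 1 + ξ 1 0) * v) - t ^ 2 * (u ^ 2 + v ^ 2) := by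
      simp [Matrix.det_fin_two]; ring
    rw [e1, e2] at hp
    have := mul_nonneg ht0.le huv.2
    have := mul_pos (pow_pos ht0 2) huv.1
    linarith

theorem stmt12 (a₁ a₂ b₁ b₂ θ : ℝ) (ha₁ : 0 < a₁) (hab : a₁ < b₁) (hba : b₁ < a₂)
    (hb₂ : a₂ < b₂) (hθ : θ = (-(a₁*a₂) + b₁*b₂) / (b₁ + b₂ - a₁ - a₂))
    (E : Set (Mat 2 2))
    (hE : E = {ξ : Mat 2 2 | ((singularValues ξ 0, singularValues ξ 1) = (a₁, a₂) ∨
      (singularValues ξ 0, singularValues ξ 1) = (b₁, b₂)) ∧ 0 < ξ.det})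
    (relintRΛ : Set (ℝ × ℝ))
    (hrel : relintRΛ = {p : ℝ × ℝ | a₁ < p.1 ∧ p.1 ≤ p.2 ∧ p.2 < b₂ ∧
      a₁ * a₂ / p.1 < p.2 ∧
      (a₁ < p.1 → p.1 < b₁ → p.2 < (-(a₁*a₂) + θ*(a₁+a₂) - θ*p.1) / (-p.1 + θ)) ∧
      p.2 < b₁ * b₂ / p.1}) :
    interior (RcoF E)
      = {ξ : Mat 2 2 | (singularValues ξ 0, singularValues ξ 1) ∈ relintRΛ ∧ 0 < ξ.det} := by
  have hD : 0 < b₁ + b₂ - a₁ - a₂ := by linarith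
  have hθD : θ * (b₁ + b₂ - a₁ - a₂) = -(a₁*a₂) + b₁*b₂ := by
    rw [hθ]; field_simp
  have hθ1 : b₁ < θ := by
    rw [hθ, lt_div_iff₀ hD]; nlinarith [mul_pos (sub_pos.2 hab) (sub_pos.2 hba)]
  have hθ2 : θ < a₂ := by
    rw [hθ, div_lt_iff₀ hD]; nlinarith [mul_pos (sub_pos.2 hb₂) (sub_pos.2 hba)]
  have hθc : θ * (a₁ + a₂) - a₁ * a₂ = θ * (b₁ + b₂) - b₁ * b₂ := by linarith
  have hθ0 : 0 < θ := by linarith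
  have hmpos : 0 < a₁ * a₂ := mul_pos ha₁ (by linarith)
  have hmM : a₁ * a₂ < b₁ * b₂ := mul_lt_mul hab hb₂.le (by linarith) (by linarith)
  have hEiff : ∀ ξ : Mat 2 2, ξ ∈ E ↔ ((nuc ξ = a₁ + a₂ ∧ ξ.det = a₁ * a₂) ∨
      (nuc ξ = b₁ + b₂ ∧ ξ.det = b₁ * b₂)) := by
    intro ξ
    have key : 0 < ξ.det → (ξ ∈ E ↔ ((nuc ξ = a₁ + a₂ ∧ ξ.det = a₁ * a₂) ∨
      (nuc ξ = b₁ + b₂ ∧ ξ.det = b₁ * b₂))) := by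
      intro hd
      obtain ⟨s1, s2, s3, s4⟩ := sv_facts ξ hd
      rw [hE, Set.mem_ofPred_eq, pair_iff s2 (by linarith), pair_iff s2 (by linarith), s3, s4]
      simp only [nuc, hd, and_true]
    constructor
    · intro h
      exact (key (by rw [hE] at h; exact h.2)).1 h
    · intro h
      exact (key (by rcases h with h | h <;> rw [h.2] <;> linarith)).2 h
  have hRHS : {ξ : Mat 2 2 | (singularValues ξ 0, singularValues ξ 1) ∈ relintRΛ ∧ 0 < ξ.det}
      = {ξ : Mat 2 2 | a₁ * a₂ < ξ.det ∧ ξ.det < b₁ * b₂ ∧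
        θ * nuc ξ - ξ.det < θ * (a₁ + a₂) - a₁ * a₂} := by
    ext ξ
    have key : 0 < ξ.det → ((singularValues ξ 0, singularValues ξ 1) ∈ relintRΛ ↔
        (a₁ * a₂ < ξ.det ∧ ξ.det < b₁ * b₂ ∧
        θ * nuc ξ - ξ.det < θ * (a₁ + a₂) - a₁ * a₂)) := by
      intro hd
      obtain ⟨s1, s2, s3, s4⟩ := sv_facts ξ hd
      rw [hrel, Set.mem_ofPred_eq]
      simp only
      rw [relint_iff ha₁ hab hba hb₂ hθ1 hθ2 hθc s1 s2, s3, s4]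
      rfl
    simp only [Set.mem_ofPred_eq]
    constructor
    · rintro ⟨h, hd⟩
      exact (key hd).1 h
    · intro h
      have hd : 0 < ξ.det := by linarith [h.1]
      exact ⟨(key hd).2 h, hd⟩
  rw [hRHS]
  apply Set.Subset.antisymm
  · intro ξ hξ
    refine interior_strict hmpos (rco_sub hθ0.le ?_) hξ
    intro η hη
    rcases (hEiff η).1 hη with ⟨h1, h2⟩ | ⟨h1, h2⟩ <;> rw [h1, h2]
    · exact ⟨le_refl _, hmM.le, le_refl _⟩
    · exact ⟨hmM.le, le_refl _, hθc.ge⟩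
  · apply interior_maximal
    · rintro ξ ⟨h1, h2, h3⟩
      have hsub : ∀ η ∈ E, η ∈ RcoF E := fun η hη f _ hf => hf η hη
      have hc : θ ^ 2 ≤ θ * (a₁ + a₂) - a₁ * a₂ := by
        nlinarith [mul_pos (by linarith : 0 < θ - a₁) (sub_pos.2 hθ2)]
      refine rco_inner (T := (θ * (a₁ + a₂) - a₁ * a₂ + ξ.det) / θ) ξ (by linarith)
        (by rw [le_div_iff₀ hθ0]; linarith) ?_
      intro η hη1 hη2
      have hη3 : θ * nuc η = θ * (a₁ + a₂) - a₁ * a₂ + η.det := by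
        rw [hη2, hη1]; field_simp
      refine rco_upper (ta := a₁ + a₂) (da := a₁ * a₂) (tb := b₁ + b₂) (db := b₁ * b₂) (θ := θ)
        (c := θ * (a₁ + a₂) - a₁ * a₂) (by linarith)
        (fun ζ z1 z2 => hsub _ ((hEiff ζ).2 (Or.inl ⟨z1, z2⟩)))
        (fun ζ z1 z2 => hsub _ ((hEiff ζ).2 (Or.inr ⟨z1, z2⟩)))
        rfl hθc.symm hc η ?_ ?_ (by linarith)
      · exact le_of_mul_le_mul_left (by linarith) hθ0
      · exact le_of_mul_le_mul_left (by linarith) hθ0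
    · have hd := cont_det
      have hn := cont_nuc
      exact (isOpen_lt continuous_const hd).inter ((isOpen_lt hd continuous_const).inter
        (isOpen_lt ((continuous_const.mul hn).sub hd) continuous_const))

end Statements
end

section
/- Let a_1 < b_1, a_2 < b_2 with a_1, a_2 > 0, a_1 ≤ a_2, b_1 ≤ b_2, and either a_1 < a_2 or b_1 < b_2. Let Γ := {(a_1 + t(b_1 − a_1), a_2 + t(b_2 − a_2)) : t ∈ [0,1]}, rel int Γ := {(a_1 + t(b_1 − a_1), a_2 + t(b_2 − a_2)) : t ∈ (0,1)}, and Λ_K := ⋃_{(α_1,α_2) ∈ rel int Γ} {(x_1, x_2) ∈ ℝ² : x_1 x_2 = α_1 α_2, 0 < x_1 ≤ x_2 < α_2}. Then Λ_K is open in the subspace {(x_1, x_2) ∈ ℝ² : x_1 ≤ x_2}, and consequently the set K := {ξ ∈ ℝ^{2×2} : (λ_1(ξ), λ_2(ξ)) ∈ Λ_K, det ξ > 0} is open in ℝ^{2×2}. -/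
open MeasureTheory Filter

attribute [local instance] Classical.propDecidable
attribute [local instance] Matrix.frobeniusNormedAddCommGroup Matrix.frobeniusNormedSpace

theorem sv_aux (ξ : Mat 2 2) : 0 ≤ singularValues ξ 0 ∧ singularValues ξ 0 ≤ singularValues ξ 1 ∧
    singularValues ξ 0 = Real.sqrt (((ξ * ξ.conjTranspose).trace -
      Real.sqrt ((ξ * ξ.conjTranspose).trace ^ 2 - 4 * (ξ * ξ.conjTranspose).det)) / 2) ∧
    singularValues ξ 1 = Real.sqrt (((ξ * ξ.conjTranspose).trace +
      Real.sqrt ((ξ * ξ.conjTranspose).trace ^ 2 - 4 * (ξ * ξ.conjTranspose).det)) / 2) := by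
  unfold singularValues
  have hA := Matrix.isHermitian_mul_conjTranspose_self ξ
  have hT := hA.trace_eq_sum_eigenvalues
  have hD := hA.det_eq_prod_eigenvalues
  have hm := Tuple.monotone_sort hA.eigenvalues (show (0 : Fin 2) ≤ 1 by decide)
  rw [← Equiv.sum_comp (Tuple.sort hA.eigenvalues)] at hT
  rw [← Equiv.prod_comp (Tuple.sort hA.eigenvalues)] at hD
  simp only [Fin.sum_univ_two, Fin.prod_univ_two, RCLike.ofReal_real_eq_id, id,
    Function.comp_apply] at hT hD hm
  rw [hT, hD]
  set x := hA.eigenvalues (Tuple.sort hA.eigenvalues 0)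
  set y := hA.eigenvalues (Tuple.sort hA.eigenvalues 1)
  have h : Real.sqrt ((x + y) ^ 2 - 4 * (x * y)) = y - x := by
    rw [show (x + y) ^ 2 - 4 * (x * y) = (y - x) ^ 2 by ring]
    exact Real.sqrt_sq (by linarith)
  rw [h]
  refine ⟨Real.sqrt_nonneg _, Real.sqrt_le_sqrt hm, ?_, ?_⟩
  · congr 1; ring
  · congr 1; ring

theorem sv_cont : Continuous (fun ξ : Mat 2 2 => (singularValues ξ 0, singularValues ξ 1)) := by
  have hc : Continuous (fun ξ : Mat 2 2 => ξ * ξ.conjTranspose) :=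
    continuous_id.matrix_mul continuous_id.matrix_conjTranspose
  have ht : Continuous (fun ξ : Mat 2 2 => (ξ * ξ.conjTranspose).trace) := hc.matrix_trace
  have hd : Continuous (fun ξ : Mat 2 2 => (ξ * ξ.conjTranspose).det) := hc.matrix_det
  refine Continuous.prodMk ?_ ?_
  · rw [funext fun ξ => (sv_aux ξ).2.2.1]
    fun_prop
  · rw [funext fun ξ => (sv_aux ξ).2.2.2]
    fun_prop

section Statements

open Metric Set

theorem stmt16 (a₁ a₂ b₁ b₂ : ℝ) (ha₁ : 0 < a₁) (ha₂ : 0 < a₂) (ha : a₁ ≤ a₂)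
    (hb : b₁ ≤ b₂) (hab₁ : a₁ < b₁) (hab₂ : a₂ < b₂) (hor : a₁ < a₂ ∨ b₁ < b₂)
    (ΛK : Set (ℝ × ℝ))
    (hΛK : ΛK = ⋃ t ∈ Set.Ioo (0:ℝ) 1,
      {x : ℝ × ℝ | x.1 * x.2 = (a₁ + t*(b₁-a₁)) * (a₂ + t*(b₂-a₂)) ∧
        0 < x.1 ∧ x.1 ≤ x.2 ∧ x.2 < a₂ + t*(b₂-a₂)}) :
    IsOpen {p : {q : ℝ × ℝ // q.1 ≤ q.2} | (p : ℝ × ℝ) ∈ ΛK} ∧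
    IsOpen {ξ : Mat 2 2 | (singularValues ξ 0, singularValues ξ 1) ∈ ΛK ∧ 0 < ξ.det} := by
  have hP : ∀ s t : ℝ, 0 ≤ s → s < t → (a₁ + s*(b₁-a₁)) * (a₂ + s*(b₂-a₂)) <
      (a₁ + t*(b₁-a₁)) * (a₂ + t*(b₂-a₂)) := by
    intro s t hs hst
    have h1 : 0 < b₁ - a₁ := by linarith
    have h2 : 0 < b₂ - a₂ := by linarith
    have h3 : s * (b₁ - a₁) < t * (b₁ - a₁) := by gcongr
    have h4 : s * (b₂ - a₂) < t * (b₂ - a₂) := by gcongr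
    have h5 : 0 ≤ s * (b₁ - a₁) := by positivity
    have h6 : 0 ≤ s * (b₂ - a₂) := by positivity
    apply mul_lt_mul'' <;> linarith
  have hd2 : 0 < b₂ - a₂ := by linarith
  obtain ⟨U, hU, hUΛ⟩ : ∃ U : Set (ℝ × ℝ), IsOpen U ∧ ∀ x : ℝ × ℝ, x.1 ≤ x.2 → (x ∈ ΛK ↔ x ∈ U) := by
    refine ⟨{x | 0 < x.1 ∧
      (a₁ + (max ((x.2 - a₂) / (b₂ - a₂)) 0)*(b₁-a₁)) *
        (a₂ + (max ((x.2 - a₂) / (b₂ - a₂)) 0)*(b₂-a₂)) < x.1 * x.2 ∧ x.1 * x.2 < b₁ * b₂}, ?_, ?_⟩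
    · refine IsOpen.inter (s := {x : ℝ × ℝ | 0 < x.1}) (isOpen_lt (by fun_prop) (by fun_prop)) ?_
      exact IsOpen.inter (s := {x : ℝ × ℝ | (a₁ + (max ((x.2 - a₂) / (b₂ - a₂)) 0)*(b₁-a₁)) *
        (a₂ + (max ((x.2 - a₂) / (b₂ - a₂)) 0)*(b₂-a₂)) < x.1 * x.2})
        (t := {x : ℝ × ℝ | x.1 * x.2 < b₁ * b₂})
        (isOpen_lt (by fun_prop) (by fun_prop)) (isOpen_lt (by fun_prop) (by fun_prop))
    · rintro ⟨x, y⟩ hxy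
      subst hΛK
      simp only [mem_iUnion, mem_ofPred_eq, exists_prop] at hxy ⊢
      constructor
      · rintro ⟨t, ⟨ht0, ht1⟩, he, hx, -, hy⟩
        refine ⟨hx, ?_, ?_⟩
        · rw [he]
          refine hP _ _ (le_max_right _ _) (max_lt ?_ ht0)
          rw [div_lt_iff₀ hd2]; linarith
        · rw [he]
          have := hP t 1 ht0.le ht1
          simpa using this
      · rintro ⟨hx, h1, h2⟩
        set s := max ((y - a₂) / (b₂ - a₂)) 0 with hs
        have hs0 : 0 ≤ s := le_max_right _ _
        have hs1 : s < 1 := by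
          by_contra! h
          rcases h.eq_or_lt with h | h
          · rw [← h] at h1; ring_nf at h1 h2; linarith
          · have := hP 1 s zero_le_one h
            ring_nf at h1 h2 this; linarith
        have hc : ContinuousOn (fun t : ℝ => (a₁ + t*(b₁-a₁)) * (a₂ + t*(b₂-a₂))) (Icc s 1) := by
          fun_prop
        obtain ⟨t, ht, hte⟩ := intermediate_value_Ioo hs1.le hc
          (show x * y ∈ Ioo _ _ from ⟨h1, by simpa using h2⟩)
        refine ⟨t, ⟨hs0.trans_lt ht.1, ht.2⟩, hte.symm, hx, hxy, ?_⟩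
        have : (y - a₂) / (b₂ - a₂) < t := (le_max_left _ _).trans_lt ht.1
        rw [div_lt_iff₀ hd2] at this
        linarith
  constructor
  · rw [show {p : {q : ℝ × ℝ // q.1 ≤ q.2} | (p : ℝ × ℝ) ∈ ΛK} = Subtype.val ⁻¹' U from
      Set.ext fun p => hUΛ p p.2]
    exact hU.preimage continuous_subtype_val
  · rw [show {ξ : Mat 2 2 | (singularValues ξ 0, singularValues ξ 1) ∈ ΛK ∧ 0 < ξ.det} =
      (fun ξ : Mat 2 2 => (singularValues ξ 0, singularValues ξ 1)) ⁻¹' U ∩ {ξ | 0 < ξ.det} from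
      Set.ext fun ξ => and_congr (hUΛ _ (sv_aux ξ).2.1) Iff.rfl]
    exact (hU.preimage sv_cont).inter
      (isOpen_lt continuous_const (continuous_id.matrix_det))

end Statements
end

section
/- Let N, n ≥ 2 and let E = {ξ_1,…,ξ_m} ⊂ ℝ^{N×n} be a finite set such that dist(ξ; B_{1/2}(0)) > 0 for every ξ ∈ E, and suppose that for every ξ ∈ E there is a set M_ξ ⊂ ℝ^{N×n} with: (i) M_ξ ⊂ ξ + {μ ∈ ℝ^{N×n} : rank μ = 1}; (ii) M_ξ ⊂ B_{1/2}(0) and #M_ξ < 4Nn; (iii) ∂B_{1/2}(0) ⊂ ⋃_{ξ∈E} int(co({ξ} ∪ M_ξ)). Then the open bounded set K := B_{1/2}(0) ∪ ⋃_{ξ∈E} int(co({ξ} ∪ M_ξ)) has the relaxation property with respect to E. -/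
open MeasureTheory Filter

attribute [local instance] Classical.propDecidable
attribute [local instance] Matrix.frobeniusNormedAddCommGroup Matrix.frobeniusNormedSpace

section Aux

open Metric Set Topology

/-- `w` is affine with gradient `A` near `x`. -/
def LA {N n : ℕ} (w : (Fin n → ℝ) → Fin N → ℝ) (x : Fin n → ℝ) (A : Mat N n) : Prop :=
  ∃ b : Fin N → ℝ, ∀ᶠ y in 𝓝 x, w y = A.mulVec y + b

theorem LA.hasFDerivAt {N n : ℕ} {w : (Fin n → ℝ) → Fin N → ℝ} {x : Fin n → ℝ} {A : Mat N n}
    (h : LA w x A) : HasFDerivAt w (Matrix.toLin' A).toContinuousLinearMap x := by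
  obtain ⟨b, hb⟩ := h
  have h1 : HasFDerivAt (fun y => (Matrix.toLin' A).toContinuousLinearMap y + b)
      (Matrix.toLin' A).toContinuousLinearMap x :=
    ((Matrix.toLin' A).toContinuousLinearMap.hasFDerivAt).add_const b
  refine h1.congr_of_eventuallyEq ?_
  filter_upwards [hb] with y hy
  simp [hy]

theorem LA.matGrad_eq {N n : ℕ} {w : (Fin n → ℝ) → Fin N → ℝ} {x : Fin n → ℝ} {A : Mat N n}
    (h : LA w x A) : matGrad w x = A := by
  unfold matGrad
  rw [h.hasFDerivAt.fderiv]
  simp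

theorem LA.unique {N n : ℕ} {w : (Fin n → ℝ) → Fin N → ℝ} {x : Fin n → ℝ} {A B : Mat N n}
    (h : LA w x A) (h' : LA w x B) : A = B := by
  rw [← h.matGrad_eq, h'.matGrad_eq]

theorem LA.eventually {N n : ℕ} {w : (Fin n → ℝ) → Fin N → ℝ} {x : Fin n → ℝ} {A : Mat N n}
    (h : LA w x A) : ∀ᶠ y in 𝓝 x, LA w y A := by
  obtain ⟨b, hb⟩ := h
  filter_upwards [hb.eventually_nhds] with y hy
  exact ⟨b, hy⟩

theorem LA.congr {N n : ℕ} {w w' : (Fin n → ℝ) → Fin N → ℝ} {x : Fin n → ℝ} {A : Mat N n}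
    (h : LA w x A) (e : ∀ᶠ y in 𝓝 x, w' y = w y) : LA w' x A := by
  obtain ⟨b, hb⟩ := h
  refine ⟨b, ?_⟩
  filter_upwards [hb, e] with y h1 h2
  rw [h2, h1]

theorem LA.add {N n : ℕ} {w w' : (Fin n → ℝ) → Fin N → ℝ} {x : Fin n → ℝ} {A B : Mat N n}
    (h : LA w x A) (h' : LA w' x B) : LA (fun y => w y + w' y) x (A + B) := by
  obtain ⟨b, hb⟩ := h
  obtain ⟨b', hb'⟩ := h'
  refine ⟨b + b', ?_⟩
  filter_upwards [hb, hb'] with y h1 h2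
  rw [h1, h2, Matrix.add_mulVec]
  abel

theorem LA.zero {N n : ℕ} {w : (Fin n → ℝ) → Fin N → ℝ} {x : Fin n → ℝ}
    (h : ∀ᶠ y in 𝓝 x, w y = 0) : LA w x 0 := by
  refine ⟨0, ?_⟩
  filter_upwards [h] with y h1
  simp [h1]

theorem LA.affine {N n : ℕ} (A : Mat N n) (b : Fin N → ℝ) (x : Fin n → ℝ) :
    LA (fun y => A.mulVec y + b) x A := ⟨b, Eventually.of_forall fun _ => rfl⟩

theorem LA.scale {N n : ℕ} {w : (Fin n → ℝ) → Fin N → ℝ} {x z : Fin n → ℝ} {A : Mat N n}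
    {r : ℝ} (hr : r ≠ 0) (h : LA w (r⁻¹ • (z - x)) A) :
    LA (fun y => r • w (r⁻¹ • (y - x))) z A := by
  obtain ⟨b, hb⟩ := h
  refine ⟨r • b - A.mulVec x, ?_⟩
  have hc : Tendsto (fun y : Fin n → ℝ => r⁻¹ • (y - x)) (𝓝 z) (𝓝 (r⁻¹ • (z - x))) :=
    (Continuous.tendsto (by fun_prop) z)
  filter_upwards [hc.eventually hb] with y hy
  rw [hy, Matrix.mulVec_smul, smul_add, smul_smul, mul_inv_cancel₀ hr, one_smul, Matrix.mulVec_sub]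
  abel

theorem abs_entry_le {N n : ℕ} (A : Mat N n) (i : Fin N) (j : Fin n) : |A i j| ≤ ‖A‖ := by
  rw [Matrix.frobenius_norm_def]
  have h1 : ‖A i j‖ ^ (2:ℝ) ≤ ∑ i, ∑ j, ‖A i j‖ ^ (2:ℝ) := by
    refine le_trans ?_ (Finset.single_le_sum (f := fun i => ∑ j, ‖A i j‖ ^ (2:ℝ))
      (fun i _ => by positivity) (Finset.mem_univ i))
    exact Finset.single_le_sum (f := fun j => ‖A i j‖ ^ (2:ℝ))
      (fun i _ => by positivity) (Finset.mem_univ j)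
  have h2 := Real.rpow_le_rpow (by positivity) h1 (by norm_num : (0:ℝ) ≤ 1/2)
  rw [← Real.rpow_mul (by positivity)] at h2
  simpa using h2

theorem abs_mulVec_le {N n : ℕ} (A : Mat N n) (v : Fin n → ℝ) (i : Fin N) :
    |A.mulVec v i| ≤ n * ‖A‖ * ‖v‖ := by
  simp only [Matrix.mulVec, dotProduct]
  refine (Finset.abs_sum_le_sum_abs _ _).trans ?_
  calc ∑ j, |A i j * v j| ≤ ∑ j : Fin n, ‖A‖ * ‖v‖ := by
        refine Finset.sum_le_sum fun j _ => ?_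
        rw [abs_mul]
        exact mul_le_mul (abs_entry_le A i j) (norm_le_pi_norm v j) (abs_nonneg _) (norm_nonneg _)
    _ = _ := by simp; ring

theorem lipschitz_of_ae {N n : ℕ} {w : (Fin n → ℝ) → Fin N → ℝ} {C : NNReal}
    (hw : LipschitzWith C w) {R : ℝ}
    (hae : ∀ᵐ x, ∃ A, LA w x A ∧ ‖A‖ ≤ R) : LipschitzWith (Real.toNNReal (n * R)) w := by
  set S : Set (Fin n → ℝ) := {x | ∃ A, LA w x A ∧ ‖A‖ ≤ R} with hS
  have hSo : IsOpen S := by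
    rw [isOpen_iff_mem_nhds]
    rintro x ⟨A, hA, hR⟩
    filter_upwards [hA.eventually] with y hy
    exact ⟨A, hy, hR⟩
  have key : ∀ (v : Fin n → ℝ) (i : Fin N) (x : Fin n → ℝ),
      |w (x + v) i - w x i| ≤ n * R * ‖v‖ := by
    intro v i
    have h1 : ∀ᵐ x : Fin n → ℝ, ∀ᵐ s : ℝ, x + s • v ∈ S := by
      rw [Measure.ae_ae_comm]
      · refine Eventually.of_forall fun s => ?_
        exact (measurePreserving_add_right volume (s • v)).quasiMeasurePreserving.ae hae
      · exact (hSo.preimage (f := fun p : (Fin n → ℝ) × ℝ => p.1 + p.2 • v)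
          (by fun_prop)).measurableSet
    have h2 : ∀ᵐ x : Fin n → ℝ, |w (x + v) i - w x i| ≤ n * R * ‖v‖ := by
      filter_upwards [h1] with x hx
      set g : ℝ → ℝ := fun s => w (x + s • v) i with hg
      have hgl : LipschitzWith (C * ‖v‖₊) g := by
        refine LipschitzWith.of_dist_le_mul fun s s' => ?_
        refine (dist_le_pi_dist (w (x + s • v)) (w (x + s' • v)) i).trans ?_
        refine (hw.dist_le_mul _ _).trans ?_
        rw [dist_add_left, dist_eq_norm, ← sub_smul, norm_smul, Real.dist_eq]
        simp only [NNReal.coe_mul, coe_nnnorm, Real.norm_eq_abs]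
        nlinarith [abs_nonneg (s-s')]
      have hac : AbsolutelyContinuousOnInterval g 0 1 :=
        (hgl.lipschitzOnWith (s := uIcc 0 1)).absolutelyContinuousOnInterval
      have h3 := hac.integral_deriv_eq_sub
      have h4 : ‖∫ s in (0:ℝ)..1, deriv g s‖ ≤ (n * R * ‖v‖) * |1 - 0| := by
        refine intervalIntegral.norm_integral_le_of_norm_le_const_ae ?_
        filter_upwards [hx] with s hs _
        obtain ⟨A, hA, hAR⟩ := hs
        have hd : HasDerivAt g (A.mulVec v i) s := by
          have e1 := hA.hasFDerivAt
          have e2 : HasDerivAt (fun s : ℝ => x + s • v) v s := by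
            simpa using ((hasDerivAt_id s).smul_const v).const_add x
          have e3 := e1.comp_hasDerivAt s e2
          have e4 := (hasDerivAt_pi.1 e3) i
          simpa using e4
        rw [hd.deriv, Real.norm_eq_abs]
        refine (abs_mulVec_le A v i).trans ?_
        gcongr
      rw [h3] at h4
      simpa [hg] using h4
    have hd := Measure.dense_of_ae h2
    have hc : IsClosed {x : Fin n → ℝ | |w (x + v) i - w x i| ≤ n * R * ‖v‖} := by
      have := hw.continuous
      refine isClosed_le ?_ continuous_const
      have h1 : Continuous fun x => w (x + v) := by fun_prop
      exact (((continuous_apply i).comp h1).sub ((continuous_apply i).comp this)).abs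
    intro x
    have : x ∈ closure {x : Fin n → ℝ | |w (x + v) i - w x i| ≤ n * R * ‖v‖} := hd x
    rwa [hc.closure_eq] at this
  refine LipschitzWith.of_dist_le_mul fun x y => ?_
  rw [dist_pi_le_iff (by positivity)]
  intro i
  have := key (x - y) i y
  rw [Real.dist_eq, dist_eq_norm]
  simp only [add_sub_cancel] at this
  exact this.trans (by gcongr; exact Real.le_coe_toNNReal _)

end Aux

section Aux

open Metric Set Topology

theorem exists_cover {n : ℕ} (G : Set (Fin n → ℝ)) (hG : IsOpen G) {ρ : ℝ} (hρ : 0 < ρ)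
    (P : (Fin n → ℝ) → Prop) (hP : ∀ x ∈ G, P x) :
    ∃ (t : Set (Fin n → ℝ)) (r : (Fin n → ℝ) → ℝ), t.Countable ∧
      (∀ x ∈ t, 0 < r x ∧ r x < ρ ∧ closedBall x (r x) ⊆ G) ∧
      (t.PairwiseDisjoint fun x => ball x (r x)) ∧ (⋃ x ∈ t, ball x (r x)) =ᵐ[volume] G := by
  obtain ⟨t, r, ht, hts, hr, hcov, hdis⟩ := Besicovitch.exists_disjoint_closedBall_covering_ae
    (volume : Measure (Fin n → ℝ)) (fun x => {r | closedBall x r ⊆ G}) G (by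
      intro x hx δ hδ
      obtain ⟨ε, hε, h⟩ := Metric.nhds_basis_closedBall.mem_iff.1 (hG.mem_nhds hx)
      refine ⟨min ε (δ/2), ?_, lt_min hε (by positivity), ?_⟩
      · exact (closedBall_subset_closedBall (min_le_left _ _)).trans h
      · exact (min_le_right _ _).trans_lt (by linarith)) (fun _ => ρ) (fun _ _ => hρ)
  refine ⟨t, r, ht, fun x hx => ⟨(hr x hx).2.1, (hr x hx).2.2, (hr x hx).1⟩, ?_, ?_⟩
  · exact hdis.mono fun x => ball_subset_closedBall
  · have hsub : (⋃ x ∈ t, ball x (r x)) ⊆ G :=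
      iUnion₂_subset fun x hx => ball_subset_closedBall.trans (hr x hx).1
    refine (LE.le.eventuallyLE hsub).antisymm ?_
    rw [ae_le_set]
    have hs : volume (⋃ x ∈ t, sphere x (r x)) = 0 := by
      rw [measure_biUnion_null_iff ht]
      intro x hx
      exact Measure.addHaar_sphere_of_ne_zero _ _ (hr x hx).2.1.ne'
    refine measure_mono_null ?_ (measure_union_null hcov hs)
    rintro z ⟨hz, hz'⟩
    by_cases h : z ∈ ⋃ x ∈ t, closedBall x (r x)
    · right
      simp only [mem_iUnion, exists_prop, mem_closedBall, mem_ball, mem_sphere, not_exists,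
        not_and, not_lt] at h hz' ⊢
      obtain ⟨x, hx, h⟩ := h
      exact ⟨x, hx, le_antisymm h (hz' x hx)⟩
    · exact Or.inl ⟨hz, h⟩

theorem mem_ball_scale {n : ℕ} {x z : Fin n → ℝ} {r : ℝ} (hr : 0 < r) :
    r⁻¹ • (z - x) ∈ ball (0 : Fin n → ℝ) 1 ↔ z ∈ ball x r := by
  rw [mem_ball_zero_iff, norm_smul, norm_inv, Real.norm_of_nonneg hr.le, mem_ball, dist_eq_norm,
    inv_mul_lt_iff₀ hr, mul_one]

theorem lintegral_scale {n : ℕ} (x : Fin n → ℝ) {r : ℝ} (hr : 0 < r) (f : (Fin n → ℝ) → ENNReal) :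
    (∫⁻ z in ball x r, f (r⁻¹ • (z - x))) * volume (ball (0 : Fin n → ℝ) 1)
      = volume (ball x r) * ∫⁻ y in ball 0 1, f y := by
  have h1 : ∫⁻ z in ball x r, f (r⁻¹ • (z - x)) =
      ENNReal.ofReal (r ^ n) * ∫⁻ y in ball 0 1, f y := by
    rw [← lintegral_indicator measurableSet_ball, ← lintegral_indicator measurableSet_ball]
    have e : ∀ z, (ball x r).indicator (fun z => f (r⁻¹ • (z - x))) z
        = (fun u => (ball (0 : Fin n → ℝ) 1).indicator f (r⁻¹ • u)) (z - x) := by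
      intro z
      by_cases hz : z ∈ ball x r
      · simp [indicator_of_mem hz, indicator_of_mem ((mem_ball_scale hr).2 hz)]
      · have : ¬ r⁻¹ • (z - x) ∈ ball (0 : Fin n → ℝ) 1 := fun h => hz ((mem_ball_scale hr).1 h)
        simp [indicator_of_notMem hz, indicator_of_notMem this]
    simp_rw [e]
    rw [lintegral_sub_right_eq_self (μ := volume)
      (fun u => (ball (0 : Fin n → ℝ) 1).indicator f (r⁻¹ • u)) x]
    have := lintegral_map_equiv (μ := (volume : Measure (Fin n → ℝ)))
      ((ball (0 : Fin n → ℝ) 1).indicator f) (MeasurableEquiv.smul₀ r⁻¹ (inv_ne_zero hr.ne'))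
    simp only [MeasurableEquiv.coe_smul₀] at this
    rw [← this, Measure.map_addHaar_smul _ (inv_ne_zero hr.ne'), lintegral_smul_measure]
    simp [abs_of_pos hr]
  have h2 : volume (ball x r) = ENNReal.ofReal (r ^ n) * volume (ball (0 : Fin n → ℝ) 1) := by
    have := Measure.addHaar_ball_mul_of_pos (volume : Measure (Fin n → ℝ)) x hr 1
    simpa using this
  rw [h1, h2]
  ring

theorem ae_scale {n : ℕ} (x : Fin n → ℝ) {r : ℝ} (hr : 0 < r) {P : (Fin n → ℝ) → Prop}
    (h : ∀ᵐ y, P y) : ∀ᵐ z, P (r⁻¹ • (z - x)) := by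
  have h1 := (Measure.quasiMeasurePreserving_smul (volume : Measure (Fin n → ℝ))
    (inv_ne_zero hr.ne')).ae h
  exact (measurePreserving_sub_right volume x).quasiMeasurePreserving.ae h1

theorem norm_le_of_lip {N n : ℕ} (hn : 0 < n) {w0 : (Fin n → ℝ) → Fin N → ℝ} {L : NNReal}
    (hL : LipschitzWith L w0) (h0 : ∀ x ∉ ball (0 : Fin n → ℝ) 1, w0 x = 0) (x : Fin n → ℝ) :
    ‖w0 x‖ ≤ 2 * L := by
  by_cases hx : x ∈ ball (0 : Fin n → ℝ) 1
  · have : Nonempty (Fin n) := ⟨⟨0, hn⟩⟩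
    have hy : ‖(fun _ => 1 : Fin n → ℝ)‖ = 1 := by simp
    have h1 := h0 (fun _ => 1) (by simp [hy])
    have h2 := hL.dist_le_mul x (fun _ => 1)
    rw [h1, dist_zero_right] at h2
    have h3 : dist x (fun _ => 1) ≤ 2 := by
      refine (dist_le_norm_add_norm _ _).trans ?_
      rw [hy]
      have := mem_ball_zero_iff.1 hx
      linarith
    nlinarith [L.coe_nonneg]
  · rw [h0 x hx]; simp

theorem transplant {N n : ℕ} (hn : 0 < n) {w0 : (Fin n → ℝ) → Fin N → ℝ} {L : NNReal}
    (hL : LipschitzWith L w0) (h0 : ∀ x ∉ ball (0 : Fin n → ℝ) 1, w0 x = 0)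
    (good : Mat N n → Prop) (hg : ∀ᵐ x, ∃ A, LA w0 x A ∧ good A)
    (G : Set (Fin n → ℝ)) (hG : IsOpen G) {ρ : ℝ} (hρ : 0 < ρ) :
    ∃ p : (Fin n → ℝ) → Fin N → ℝ, LipschitzWith (2 * L) p ∧ (∀ z ∉ G, p z = 0) ∧
      (∀ z, ‖p z‖ ≤ ρ * (2 * L)) ∧ (∀ᵐ z, z ∈ G → ∃ A, LA p z A ∧ good A) ∧
      ∀ F : Mat N n → ENNReal, (∫⁻ z in G, F (matGrad p z)) * volume (ball (0 : Fin n → ℝ) 1)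
        = volume G * ∫⁻ z in ball 0 1, F (matGrad w0 z) := by
  obtain ⟨t, r, ht, hr, hdis, hcov⟩ := exists_cover G hG hρ (fun _ => True) (fun _ _ => trivial)
  set q : (Fin n → ℝ) → (Fin n → ℝ) → Fin N → ℝ :=
    fun x z => r x • w0 ((r x)⁻¹ • (z - x)) with hq
  have hqL : ∀ x ∈ t, LipschitzWith L (q x) := by
    intro x hx
    refine LipschitzWith.of_dist_le_mul fun z z' => ?_
    have h1 := hL.dist_le_mul ((r x)⁻¹ • (z - x)) ((r x)⁻¹ • (z' - x))
    simp only [hq]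
    rw [dist_smul₀, Real.norm_of_nonneg (hr x hx).1.le]
    rw [dist_smul₀, dist_sub_right, norm_inv, Real.norm_of_nonneg (hr x hx).1.le] at h1
    calc r x * _ ≤ r x * (L * ((r x)⁻¹ * dist z z')) :=
          mul_le_mul_of_nonneg_left h1 (hr x hx).1.le
      _ = L * dist z z' := by field_simp [(hr x hx).1.ne']
  have hq0 : ∀ x ∈ t, ∀ z ∉ ball x (r x), q x z = 0 := by
    intro x hx z hz
    simp only [hq]
    rw [h0, smul_zero]
    exact fun h => hz ((mem_ball_scale (hr x hx).1).1 h)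
  set p : (Fin n → ℝ) → Fin N → ℝ := fun z =>
    if h : ∃ x ∈ t, z ∈ ball x (r x) then q h.choose z else 0 with hp
  have hp1 : ∀ x ∈ t, ∀ z ∈ ball x (r x), p z = q x z := by
    intro x hx z hz
    have h : ∃ x ∈ t, z ∈ ball x (r x) := ⟨x, hx, hz⟩
    have e : h.choose = x := by
      by_contra hne
      exact Set.disjoint_left.1 (hdis h.choose_spec.1 hx hne) h.choose_spec.2 hz
    simp only [hp]
    rw [dif_pos h, e]
  have hp0 : ∀ z, (¬ ∃ x ∈ t, z ∈ ball x (r x)) → p z = 0 := by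
    intro z hz
    simp only [hp]
    rw [dif_neg hz]
  have hLA : ∀ x ∈ t, ∀ᵐ z, z ∈ ball x (r x) →
      ∃ A, LA p z A ∧ LA w0 ((r x)⁻¹ • (z - x)) A ∧ good A := by
    intro x hx
    filter_upwards [ae_scale x (hr x hx).1 hg] with z hz hzb
    obtain ⟨A, hA, hgA⟩ := hz
    refine ⟨A, (hA.scale (hr x hx).1.ne').congr ?_, hA, hgA⟩
    filter_upwards [isOpen_ball.mem_nhds hzb] with y hy
    exact hp1 x hx y hy
  have hLA' := (ae_ball_iff ht).2 hLA
  refine ⟨p, ?_, ?_, ?_, ?_, ?_⟩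
  · refine LipschitzWith.of_dist_le_mul fun z z' => ?_
    have aux : ∀ x ∈ t, ∀ z ∈ ball x (r x), ∀ z' ∉ ball x (r x), ‖p z‖ ≤ L * dist z z' := by
      intro x hx z hz z' hz'
      have := (hqL x hx).dist_le_mul z z'
      rwa [hq0 x hx z' hz', dist_zero_right, ← hp1 x hx z hz] at this
    have hpos : 0 ≤ (L : ℝ) * dist z z' := by positivity
    have e2 : ((2 * L : NNReal) : ℝ) * dist z z' = L * dist z z' + L * dist z z' := by
      push_cast; ring
    rw [e2]
    by_cases h : ∃ x ∈ t, z ∈ ball x (r x)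
    · obtain ⟨x, hx, hz⟩ := h
      by_cases hz' : z' ∈ ball x (r x)
      · rw [hp1 x hx z hz, hp1 x hx z' hz']
        have := (hqL x hx).dist_le_mul z z'
        linarith
      · have h1 := aux x hx z hz z' hz'
        have h2 : ‖p z'‖ ≤ L * dist z z' := by
          by_cases h' : ∃ x ∈ t, z' ∈ ball x (r x)
          · obtain ⟨x', hx', hz'2⟩ := h'
            rw [dist_comm]
            refine aux x' hx' z' hz'2 z ?_
            intro hh
            have hne : x ≠ x' := by
              rintro rfl
              exact hz' hz'2
            exact Set.disjoint_left.1 (hdis hx hx' hne) hz hh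
          · rw [hp0 z' h']; simpa using hpos
        exact (dist_le_norm_add_norm _ _).trans (add_le_add h1 h2)
    · rw [hp0 z h, dist_zero_left]
      by_cases h' : ∃ x ∈ t, z' ∈ ball x (r x)
      · obtain ⟨x', hx', hz'2⟩ := h'
        have := aux x' hx' z' hz'2 z (fun hh => h ⟨x', hx', hh⟩)
        rw [dist_comm] at this
        linarith
      · rw [hp0 z' h']; simp; linarith
  · intro z hz
    refine hp0 z ?_
    rintro ⟨x, hx, hzx⟩
    exact hz ((hr x hx).2.2 (ball_subset_closedBall hzx))
  · intro z
    by_cases h : ∃ x ∈ t, z ∈ ball x (r x)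
    · obtain ⟨x, hx, hz⟩ := h
      rw [hp1 x hx z hz]
      simp only [hq]
      rw [norm_smul, Real.norm_of_nonneg (hr x hx).1.le]
      exact mul_le_mul (hr x hx).2.1.le (norm_le_of_lip hn hL h0 _) (norm_nonneg _) hρ.le
    · rw [hp0 z h]; simp; positivity
  · filter_upwards [hLA', hcov.mem_iff] with z hz hc hzG
    obtain ⟨x, hx, hzx⟩ := mem_iUnion₂.1 (hc.2 hzG)
    obtain ⟨A, h1, h2, h3⟩ := hz x hx hzx
    exact ⟨A, h1, h3⟩
  · intro F
    have hm : ∀ i ∈ t, MeasurableSet (ball i (r i)) := fun _ _ => measurableSet_ball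
    rw [← setLIntegral_congr hcov, ← measure_congr hcov, lintegral_biUnion ht hm hdis,
      measure_biUnion ht hdis hm, ← ENNReal.tsum_mul_right, ← ENNReal.tsum_mul_right]
    refine tsum_congr fun x => ?_
    rw [← lintegral_scale x.1 (hr x.1 x.2).1]
    congr 1
    refine setLIntegral_congr_fun_ae measurableSet_ball ?_
    filter_upwards [hLA x.1 x.2] with z hz hzx
    obtain ⟨A, h1, h2, h3⟩ := hz hzx
    rw [h1.matGrad_eq, h2.matGrad_eq]

theorem piecewise_of_ae {N n : ℕ} {u : (Fin n → ℝ) → Fin N → ℝ} (hu : Continuous u)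
    {Ω : Set (Fin n → ℝ)} (hΩ : IsOpen Ω) (h : ∀ᵐ x, x ∈ Ω → ∃ A, LA u x A) :
    PiecewiseAffineOn u Ω := by
  refine ⟨hu.continuousOn, ?_⟩
  set S : Set (Fin n → ℝ) := {x | ∃ A, LA u x A}
  set f : (Fin n → ℝ) → Set ℝ := fun x => {r | closedBall x r ⊆ Ω ∧ AffineOn u (closedBall x r)}
  obtain ⟨t, r, ht, hts, hr, hcov, hdis⟩ := Besicovitch.exists_disjoint_closedBall_covering_ae
    (volume : Measure (Fin n → ℝ)) f (Ω ∩ S) (by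
      rintro x ⟨hx, A, b, hA⟩ δ hδ
      obtain ⟨ε, hε, h⟩ := Metric.nhds_basis_closedBall.mem_iff.1
        (Filter.inter_mem (hΩ.mem_nhds hx) hA)
      refine ⟨min ε (δ/2), ⟨?_, A, b, ?_⟩, lt_min hε (by positivity), ?_⟩
      · exact (closedBall_subset_closedBall (min_le_left _ _)).trans (h.trans inter_subset_left)
      · exact (closedBall_subset_closedBall (min_le_left _ _)).trans (h.trans inter_subset_right)
      · exact (min_le_right _ _).trans_lt (by linarith)) (fun _ => 1) (fun _ _ => one_pos)
  have := ht.toEncodable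
  set P : ℕ → Set (Fin n → ℝ) := fun k =>
    ⋃ x : t, ⋃ _ : Encodable.encode x = k, ball x.1 (r x.1) with hP
  have hPe : ∀ x : t, P (Encodable.encode x) = ball x.1 (r x.1) := by
    intro x
    ext z
    simp only [hP, mem_iUnion, exists_prop]
    constructor
    · rintro ⟨y, hy, hz⟩
      rwa [Encodable.encode_injective hy] at hz
    · exact fun hz => ⟨x, rfl, hz⟩
  have hPc : ∀ k, P k = ∅ ∨ ∃ x : t, Encodable.encode x = k := by
    intro k
    by_cases h : ∃ x : t, Encodable.encode x = k
    · exact Or.inr h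
    · left
      ext z
      simp only [hP, mem_iUnion, exists_prop, mem_empty_iff_false, iff_false]
      rintro ⟨y, hy, hz⟩
      exact h ⟨y, hy⟩
  refine ⟨P, ?_, ?_, ?_, ?_, ?_⟩
  · intro k
    exact isOpen_iUnion fun x => isOpen_iUnion fun _ => isOpen_ball
  · intro k
    exact iUnion₂_subset fun x _ => ball_subset_closedBall.trans (hr x.1 x.2).1.1
  · intro k l hkl
    rcases hPc k with h | ⟨x, rfl⟩
    · simp [h]
    rcases hPc l with h | ⟨y, rfl⟩
    · simp [h]
    rw [hPe, hPe]
    have hne : x.1 ≠ y.1 := by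
      intro h
      exact hkl (by rw [Subtype.ext h])
    exact (hdis x.2 y.2 hne).mono ball_subset_closedBall ball_subset_closedBall
  · have hs : volume (⋃ x ∈ t, sphere x (r x)) = 0 := by
      rw [measure_biUnion_null_iff ht]
      intro x hx
      exact Measure.addHaar_sphere_of_ne_zero _ _ (hr x hx).2.1.ne'
    have hS : volume (Ω \ S) = 0 := by
      refine measure_mono_null ?_ (ae_iff.1 h)
      rintro x ⟨h1, h2⟩
      simp only [mem_ofPred_eq, Classical.not_imp]
      exact ⟨h1, h2⟩
    refine measure_mono_null ?_ (measure_union_null (measure_union_null hcov hs) hS)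
    rintro z ⟨hz, hz'⟩
    by_cases hzS : z ∈ S
    swap
    · exact Or.inr ⟨hz, hzS⟩
    left
    by_cases h : z ∈ ⋃ x ∈ t, closedBall x (r x)
    · right
      obtain ⟨x, hx, h⟩ := mem_iUnion₂.1 h
      refine mem_iUnion₂.2 ⟨x, hx, le_antisymm h ?_⟩
      by_contra hlt
      refine hz' (mem_iUnion.2 ⟨Encodable.encode (⟨x, hx⟩ : t), ?_⟩)
      rw [hPe]
      exact not_le.1 hlt
    · exact Or.inl ⟨⟨hz, hzS⟩, h⟩
  · intro k
    rcases hPc k with h | ⟨x, rfl⟩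
    · rw [h]
      exact ⟨0, 0, by simp⟩
    · rw [hPe]
      obtain ⟨A, b, h⟩ := (hr x.1 x.2).1.2
      exact ⟨A, b, fun z hz => h z (ball_subset_closedBall hz)⟩

end Aux

section Aux

open Metric Set Topology

/-- `f` is affine with gradient `p` near `x` (scalar case). -/
def LS {n : ℕ} (f : (Fin n → ℝ) → ℝ) (x p : Fin n → ℝ) : Prop :=
  ∃ c : ℝ, ∀ᶠ y in 𝓝 x, f y = p ⬝ᵥ y + c

/-- the linear functional `y ↦ p ⬝ᵥ y`. -/
noncomputable def dotCLM {n : ℕ} (p : Fin n → ℝ) : (Fin n → ℝ) →L[ℝ] ℝ :=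
  LinearMap.toContinuousLinearMap
    { toFun := fun y => p ⬝ᵥ y
      map_add' := fun x y => dotProduct_add p x y
      map_smul' := fun c x => by simp [dotProduct_smul] }

theorem dotCLM_apply {n : ℕ} (p y : Fin n → ℝ) : dotCLM p y = p ⬝ᵥ y := rfl

theorem dotCLM_inj {n : ℕ} {p q : Fin n → ℝ} (h : dotCLM p = dotCLM q) : p = q := by
  refine dotProduct_eq p q fun u => ?_
  rw [← dotCLM_apply, h, dotCLM_apply]

theorem LS.hasFDerivAt {n : ℕ} {f : (Fin n → ℝ) → ℝ} {x p : Fin n → ℝ} (h : LS f x p) :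
    HasFDerivAt f (dotCLM p) x := by
  obtain ⟨c, hc⟩ := h
  refine ((dotCLM p).hasFDerivAt.add_const c).congr_of_eventuallyEq ?_
  filter_upwards [hc] with y hy
  rw [hy, dotCLM_apply]

theorem LS.unique {n : ℕ} {f : (Fin n → ℝ) → ℝ} {x p q : Fin n → ℝ} (h : LS f x p)
    (h' : LS f x q) : p = q :=
  dotCLM_inj (h.hasFDerivAt.unique h'.hasFDerivAt)

theorem LS.eventually {n : ℕ} {f : (Fin n → ℝ) → ℝ} {x p : Fin n → ℝ} (h : LS f x p) :
    ∀ᶠ y in 𝓝 x, LS f y p := by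
  obtain ⟨b, hb⟩ := h
  filter_upwards [hb.eventually_nhds] with y hy
  exact ⟨b, hy⟩

theorem LS.congr {n : ℕ} {f g : (Fin n → ℝ) → ℝ} {x p : Fin n → ℝ} (h : LS f x p)
    (e : ∀ᶠ y in 𝓝 x, g y = f y) : LS g x p := by
  obtain ⟨b, hb⟩ := h
  refine ⟨b, ?_⟩
  filter_upwards [hb, e] with y h1 h2
  rw [h2, h1]

/-- Lipschitz and a.e. locally affine with gradient in `Γ`. -/
def PA {n : ℕ} (Γ : Set (Fin n → ℝ)) (f : (Fin n → ℝ) → ℝ) : Prop :=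
  (∃ C, LipschitzWith C f) ∧ ∀ᵐ x, ∃ p ∈ Γ, LS f x p

theorem PA.mono {n : ℕ} {Γ Γ' : Set (Fin n → ℝ)} {f : (Fin n → ℝ) → ℝ} (h : PA Γ f)
    (hs : Γ ⊆ Γ') : PA Γ' f := by
  refine ⟨h.1, ?_⟩
  filter_upwards [h.2] with x hx
  obtain ⟨p, hp, hx⟩ := hx
  exact ⟨p, hs hp, hx⟩

theorem PA.sup {n : ℕ} {Γ : Set (Fin n → ℝ)} {f g : (Fin n → ℝ) → ℝ} (hf : PA Γ f)
    (hg : PA Γ g) : PA Γ (fun x => max (f x) (g x)) := by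
  obtain ⟨⟨C, hC⟩, hf⟩ := hf
  obtain ⟨⟨D, hD⟩, hg⟩ := hg
  have hL := hC.max hD
  refine ⟨⟨_, hL⟩, ?_⟩
  filter_upwards [hf, hg, hL.ae_differentiableAt] with x h1 h2 h3
  obtain ⟨p, hp, h1⟩ := h1
  obtain ⟨q, hq, h2⟩ := h2
  rcases lt_trichotomy (f x) (g x) with h | h | h
  · refine ⟨q, hq, h2.congr ?_⟩
    filter_upwards [hC.continuous.continuousAt.eventually_lt hD.continuous.continuousAt h] with y hy
    exact max_eq_right hy.le
  · have d := h3.hasFDerivAt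
    have e1 : IsLocalMin (fun y => max (f y) (g y) - f y) x := by
      refine Eventually.of_forall fun y => ?_
      simp [h]
    have e2 : IsLocalMin (fun y => max (f y) (g y) - g y) x := by
      refine Eventually.of_forall fun y => ?_
      simp [h]
    have d1 := e1.hasFDerivAt_eq_zero (d.sub h1.hasFDerivAt)
    have d2 := e2.hasFDerivAt_eq_zero (d.sub h2.hasFDerivAt)
    have hpq : p = q := dotCLM_inj (by rw [← sub_eq_zero.1 d1, ← sub_eq_zero.1 d2])
    subst hpq
    refine ⟨p, hp, h1.congr ?_⟩
    obtain ⟨b, hb⟩ := h1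
    obtain ⟨c, hc⟩ := h2
    have : b = c := by
      have := hb.self_of_nhds
      have := hc.self_of_nhds
      linarith
    filter_upwards [hb, hc] with y h1 h2
    rw [h1, h2, this, max_self]
  · refine ⟨p, hp, h1.congr ?_⟩
    filter_upwards [hD.continuous.continuousAt.eventually_lt hC.continuous.continuousAt h] with y hy
    exact max_eq_left hy.le

theorem PA.inf {n : ℕ} {Γ : Set (Fin n → ℝ)} {f g : (Fin n → ℝ) → ℝ} (hf : PA Γ f)
    (hg : PA Γ g) : PA Γ (fun x => min (f x) (g x)) := by
  have neg : ∀ {Γ : Set (Fin n → ℝ)} {f : (Fin n → ℝ) → ℝ}, PA Γ f →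
      PA {p | -p ∈ Γ} (fun x => - f x) := by
    intro Γ f hf
    obtain ⟨⟨C, hC⟩, hf⟩ := hf
    refine ⟨⟨C, hC.neg⟩, ?_⟩
    filter_upwards [hf] with x hx
    obtain ⟨p, hp, b, hb⟩ := hx
    refine ⟨-p, by simpa using hp, -b, ?_⟩
    filter_upwards [hb] with y hy
    rw [hy, neg_dotProduct]
    ring
  have h := neg ((neg hf).sup (neg hg))
  have e : (fun x => min (f x) (g x)) = fun x => - max (- f x) (- g x) := by
    funext x
    rw [max_neg_neg, neg_neg]
  rw [e]
  refine h.mono ?_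
  intro p hp
  simpa using hp

theorem PA.affine {n : ℕ} {Γ : Set (Fin n → ℝ)} (p : Fin n → ℝ) (hp : p ∈ Γ) (c : ℝ) :
    PA Γ (fun x => p ⬝ᵥ x + c) := by
  refine ⟨⟨_, (dotCLM p).lipschitz.add (LipschitzWith.const c)⟩, ?_⟩
  exact Eventually.of_forall fun x => ⟨p, hp, c, Eventually.of_forall fun _ => rfl⟩

theorem pa_cone {n : ℕ} (hn : 0 < n) {δ : ℝ} (hδ : 0 < δ) :
    PA {p : Fin n → ℝ | ∀ u, |p ⬝ᵥ u| ≤ δ * ‖u‖} (fun x => δ * (1 - ‖x‖)) := by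
  set Γ := {p : Fin n → ℝ | ∀ u, |p ⬝ᵥ u| ≤ δ * ‖u‖} with hΓ
  have hne : (Finset.univ : Finset (Fin n)).Nonempty := ⟨⟨0, hn⟩, Finset.mem_univ _⟩
  set F : Fin n → (Fin n → ℝ) → ℝ := fun i x => min (δ * (1 - x i)) (δ * (1 + x i)) with hF
  have h1 : PA Γ (Finset.univ.inf' hne F) := by
    refine Finset.inf'_induction hne F (p := PA Γ) ?_ ?_
    · intro a ha b hb
      exact ha.inf hb
    · intro i _
      have hi : ∀ s : ℝ, |s| = δ → PA Γ (fun x => δ + s * x i) := by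
        intro s hs
        have := PA.affine (Γ := Γ) (Pi.single i s) (by
          intro u
          rw [single_dotProduct, abs_mul, hs]
          exact mul_le_mul_of_nonneg_left (norm_le_pi_norm u i) hδ.le) δ
        convert this using 2 with x
        rw [single_dotProduct]
        ring
      have e1 := hi (-δ) (by rw [abs_neg, abs_of_pos hδ])
      have e2 := hi δ (abs_of_pos hδ)
      convert e1.inf e2 using 2 with x
      simp only [hF]
      congr 1 <;> ring
  convert h1 using 1
  funext x
  rw [Finset.inf'_apply]
  apply le_antisymm
  · rw [Finset.le_inf'_iff]
    intro i _
    have := abs_le.1 (norm_le_pi_norm x i)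
    refine le_min ?_ ?_ <;> refine mul_le_mul_of_nonneg_left ?_ hδ.le <;> linarith
  · have hx : ‖x‖ ≤ 1 - δ⁻¹ * (Finset.univ.inf' hne fun i => F i x) := by
      have : Nonempty (Fin n) := ⟨⟨0, hn⟩⟩
      rw [pi_norm_le_iff_of_nonempty]
      intro i
      have h2 : (Finset.univ.inf' hne fun i => F i x) ≤ F i x :=
        Finset.inf'_le (f := fun i => F i x) (Finset.mem_univ i)
      have h3 := h2.trans (min_le_left _ _)
      have h4 := h2.trans (min_le_right _ _)
      have h3' := mul_le_mul_of_nonneg_left h3 (inv_nonneg.2 hδ.le)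
      have h4' := mul_le_mul_of_nonneg_left h4 (inv_nonneg.2 hδ.le)
      rw [inv_mul_cancel_left₀ hδ.ne'] at h3' h4'
      rw [Real.norm_eq_abs, abs_le]
      constructor <;> linarith
    have := mul_le_mul_of_nonneg_left hx hδ.le
    rw [mul_sub, mul_inv_cancel_left₀ hδ.ne'] at this
    linarith

/-- sawtooth -/
noncomputable def saw (t s : ℝ) : ℝ := min ((1 - t) * Int.fract s) (t * (1 - Int.fract s))

theorem saw_nonneg {t : ℝ} (h0 : 0 < t) (h1 : t < 1) (s : ℝ) : 0 ≤ saw t s := by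
  have := Int.fract_nonneg s
  have := Int.fract_lt_one s
  refine le_min ?_ ?_ <;> apply mul_nonneg <;> linarith

theorem saw_le {t : ℝ} (h0 : 0 < t) (h1 : t < 1) (s : ℝ) : saw t s ≤ 1 := by
  have := Int.fract_nonneg s
  have := Int.fract_lt_one s
  refine (min_le_left _ _).trans ?_
  nlinarith

theorem saw_lip {t : ℝ} (h0 : 0 < t) (h1 : t < 1) : LipschitzWith 1 (saw t) := by
  have key : ∀ x y : ℝ, x ≤ y → |saw t x - saw t y| ≤ y - x := by
    intro x y hxy
    have fx := Int.fract_nonneg x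
    have fx' := Int.fract_lt_one x
    have fy := Int.fract_nonneg y
    have fy' := Int.fract_lt_one y
    have ex := Int.floor_add_fract x
    have ey := Int.floor_add_fract y
    rcases (Int.floor_le_floor hxy).eq_or_lt with h | h
    · have e : Int.fract y - Int.fract x = y - x := by
        rw [← h] at ey
        linarith
      unfold saw
      refine (abs_min_sub_min_le_max _ _ _ _).trans (max_le ?_ ?_)
      · rw [← mul_sub, abs_mul, abs_of_pos (by linarith : 0 < 1 - t), abs_sub_comm, e,
          abs_of_nonneg (by linarith : 0 ≤ y - x)]
        nlinarith
      · rw [← mul_sub, abs_mul, abs_of_pos h0]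
        have : (1 - Int.fract x - (1 - Int.fract y)) = y - x := by linarith
        rw [this, abs_of_nonneg (by linarith : 0 ≤ y - x)]
        nlinarith
    · have h' : (⌊x⌋ : ℝ) + 1 ≤ ⌊y⌋ := by exact_mod_cast h
      have a1 := saw_nonneg h0 h1 x
      have a2 := saw_nonneg h0 h1 y
      have b1 : saw t x ≤ y - x := (min_le_right _ _).trans (by nlinarith)
      have b2 : saw t y ≤ y - x := (min_le_left _ _).trans (by nlinarith)
      rw [abs_le]
      constructor <;> linarith
  refine LipschitzWith.of_dist_le_mul fun x y => ?_
  rw [Real.dist_eq, Real.dist_eq, NNReal.coe_one, one_mul]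
  rcases le_total x y with h | h
  · rw [abs_sub_comm x y, abs_of_nonneg (by linarith : 0 ≤ y - x)]
    exact key x y h
  · rw [abs_sub_comm, abs_of_nonneg (by linarith : 0 ≤ x - y)]
    exact key y x h

theorem saw_loc {t : ℝ} (s : ℝ) (hs : ∀ m : ℤ, s ≠ m)
    (hs' : ∀ m : ℤ, s ≠ m + t) :
    (∃ c, ∀ᶠ y in 𝓝 s, saw t y = (1 - t) * y + c) ∨ (∃ c, ∀ᶠ y in 𝓝 s, saw t y = -t * y + c) := by
  have hlt : (⌊s⌋ : ℝ) < s := lt_of_le_of_ne (Int.floor_le s) (hs _).symm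
  have hlt' : s < ⌊s⌋ + 1 := Int.lt_floor_add_one s
  have hfl : ∀ᶠ y : ℝ in 𝓝 s, Int.fract y = y - (⌊s⌋ : ℝ) := by
    filter_upwards [Ioo_mem_nhds hlt hlt'] with y hy
    have : ⌊y⌋ = ⌊s⌋ := Int.floor_eq_iff.2 ⟨hy.1.le, hy.2⟩
    rw [← this]; rfl
  rcases lt_or_gt_of_ne (hs' ⌊s⌋) with h | h
  · left
    refine ⟨-(1-t) * ⌊s⌋, ?_⟩
    filter_upwards [hfl, Iio_mem_nhds h] with y hy hy'
    simp only [saw, hy, mem_Iio] at hy' ⊢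
    rw [min_eq_left (by linarith)]
    ring
  · right
    refine ⟨t * (1 + ⌊s⌋), ?_⟩
    filter_upwards [hfl, Ioi_mem_nhds h] with y hy hy'
    simp only [saw, hy, mem_Ioi] at hy' ⊢
    rw [min_eq_right (by linarith)]
    ring

theorem hyperplane_null {n : ℕ} {v : Fin n → ℝ} (hv : v ≠ 0) (c : ℝ) :
    ∀ᵐ x : Fin n → ℝ, v ⬝ᵥ x ≠ c := by
  let s : AffineSubspace ℝ (Fin n → ℝ) :=
    { carrier := {x | v ⬝ᵥ x = c}
      smul_vsub_vadd_mem' := by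
        intro a p q r hp hq hr
        simp only [mem_ofPred_eq] at *
        simp [dotProduct_add, dotProduct_smul, dotProduct_sub, hp, hq, hr] }
  have hs : s ≠ ⊤ := by
    intro h
    have h1 : (0 : Fin n → ℝ) ∈ s := by rw [h]; trivial
    have h2 : v ∈ s := by rw [h]; trivial
    change v ⬝ᵥ 0 = c at h1
    change v ⬝ᵥ v = c at h2
    rw [dotProduct_zero] at h1
    rw [← h1] at h2
    exact hv (dotProduct_self_eq_zero.1 h2)
  have := Measure.addHaar_affineSubspace (volume : Measure (Fin n → ℝ)) s hs
  have h3 : volume {x : Fin n → ℝ | v ⬝ᵥ x = c} = 0 := this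
  rw [ae_iff]
  simpa using h3

theorem pa_saw {n : ℕ} {v : Fin n → ℝ} (hv : v ≠ 0) {t : ℝ} (h0 : 0 < t) (h1 : t < 1)
    {k : ℝ} (hk : 0 < k) :
    PA {(1 - t) • v, (-t) • v} (fun x => k⁻¹ * saw t (k * (v ⬝ᵥ x))) := by
  refine ⟨⟨_, (((lipschitzWith_smul k⁻¹).comp (saw_lip h0 h1)).comp
    (lipschitzWith_smul k)).comp (dotCLM v).lipschitz⟩, ?_⟩
  have e1 : ∀ᵐ x : Fin n → ℝ, ∀ m : ℤ, v ⬝ᵥ x ≠ k⁻¹ * m :=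
    ae_all_iff.2 fun m => hyperplane_null hv _
  have e2 : ∀ᵐ x : Fin n → ℝ, ∀ m : ℤ, v ⬝ᵥ x ≠ k⁻¹ * (m + t) :=
    ae_all_iff.2 fun m => hyperplane_null hv _
  filter_upwards [e1, e2] with x hx1 hx2
  have hc : Tendsto (fun y : Fin n → ℝ => k * (v ⬝ᵥ y)) (𝓝 x) (𝓝 (k * (v ⬝ᵥ x))) :=
    ((dotCLM v).continuous.const_smul k).tendsto x
  have conv : ∀ a : ℝ, (∃ c, ∀ᶠ y in 𝓝 (k * (v ⬝ᵥ x)), saw t y = a * y + c) →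
      LS (fun x => k⁻¹ * saw t (k * (v ⬝ᵥ x))) x (a • v) := by
    rintro a ⟨c, h⟩
    refine ⟨k⁻¹ * c, ?_⟩
    filter_upwards [hc.eventually h] with y hy
    rw [hy, smul_dotProduct, smul_eq_mul]
    field_simp
  rcases saw_loc (t := t) (k * (v ⬝ᵥ x)) (fun m h => hx1 m (by rw [← h]; field_simp))
    (fun m h => hx2 m (by rw [← h]; field_simp)) with h | h
  · exact ⟨_, by simp, conv _ h⟩
  · exact ⟨_, by simp, conv _ h⟩

end Aux

section Aux

open Metric Set Topology

theorem mean_zero {n : ℕ} {ψ : (Fin n → ℝ) → ℝ} {C : NNReal} (hL : LipschitzWith C ψ)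
    (h0 : ∀ x ∉ ball (0 : Fin n → ℝ) 1, ψ x = 0) (v : Fin n → ℝ) :
    ∫ x, lineDeriv ℝ ψ x v = 0 := by
  have hc : HasCompactSupport ψ :=
    HasCompactSupport.intro (isCompact_closedBall (0 : Fin n → ℝ) 1) fun x hx =>
      h0 x fun h => hx (ball_subset_closedBall h)
  have := LipschitzWith.integral_lineDeriv_mul_eq (μ := volume) (LipschitzWith.const (1 : ℝ))
    hL hc (-v)
  have e : ∀ x, lineDeriv ℝ (fun _ : Fin n → ℝ => (1:ℝ)) x (-v) = 0 := by
    intro x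
    simp [lineDeriv]
  simpa [e] using this.symm

theorem ls_isOpen {n : ℕ} (ψ : (Fin n → ℝ) → ℝ) (p : Fin n → ℝ) :
    IsOpen {x | x ∈ ball (0 : Fin n → ℝ) 1 ∧ LS ψ x p} := by
  refine isOpen_ball.inter (isOpen_iff_mem_nhds.2 fun x hx => ?_)
  exact LS.eventually hx

theorem ae_not_sphere {n : ℕ} (hn : 0 < n) :
    ∀ᵐ x : Fin n → ℝ, x ∉ sphere (0 : Fin n → ℝ) 1 := by
  have : Nonempty (Fin n) := ⟨⟨0, hn⟩⟩
  exact compl_mem_ae_iff.2 (Measure.addHaar_sphere volume _ _)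

theorem balance {n : ℕ} (hn : 0 < n) {v : Fin n → ℝ} (hv : v ≠ 0) {t δ : ℝ}
    {ψ : (Fin n → ℝ) → ℝ} {C : NNReal} (hL : LipschitzWith C ψ) 
    (h0 : ∀ x ∉ ball (0 : Fin n → ℝ) 1, ψ x = 0)
    (hae : ∀ᵐ x, ∃ p, LS ψ x p ∧ (p = (1 - t) • v ∨ p = (-t) • v ∨ ∀ u, |p ⬝ᵥ u| ≤ δ * ‖u‖))
    (hδ : 0 ≤ δ) :
    |(v ⬝ᵥ v) * ((1 - t) * volume.real {x | x ∈ ball (0 : Fin n → ℝ) 1 ∧ LS ψ x ((1 - t) • v)}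
      - t * volume.real {x | x ∈ ball (0 : Fin n → ℝ) 1 ∧ LS ψ x ((-t) • v)})|
      ≤ δ * ‖v‖ * volume.real (ball (0 : Fin n → ℝ) 1) := by
  set SA := {x | x ∈ ball (0 : Fin n → ℝ) 1 ∧ LS ψ x ((1 - t) • v)} with hSA
  set SB := {x | x ∈ ball (0 : Fin n → ℝ) 1 ∧ LS ψ x ((-t) • v)} with hSB
  set f := fun x => lineDeriv ℝ ψ x v with hf
  set D := v ⬝ᵥ v with hD
  have oA : IsOpen SA := ls_isOpen _ _
  have oB : IsOpen SB := ls_isOpen _ _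
  have fA : volume SA ≠ ⊤ := ((measure_mono fun x hx => hx.1).trans_lt measure_ball_lt_top).ne
  have fB : volume SB ≠ ⊤ := ((measure_mono fun x hx => hx.1).trans_lt measure_ball_lt_top).ne
  set g : (Fin n → ℝ) → ℝ := fun x => SA.indicator (fun _ => (1 - t) * D) x
    + SB.indicator (fun _ => (- t) * D) x with hg
  set r : (Fin n → ℝ) → ℝ := (ball (0 : Fin n → ℝ) 1).indicator (fun _ => δ * ‖v‖) with hr
  have iA : Integrable (SA.indicator (fun _ => (1 - t) * D)) volume :=
    (integrable_indicator_iff oA.measurableSet).2 (integrableOn_const fA)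
  have iB : Integrable (SB.indicator (fun _ => (- t) * D)) volume :=
    (integrable_indicator_iff oB.measurableSet).2 (integrableOn_const fB)
  have ig : Integrable g volume := iA.add iB
  have ir : Integrable r volume :=
    (integrable_indicator_iff measurableSet_ball).2 (integrableOn_const measure_ball_lt_top.ne)
  have hdis : ∀ x, x ∈ SA → x ∈ SB → False := by
    intro x h1 h2
    have := h1.2.unique h2.2
    apply hv
    have h3 : (1 - t) • v - (-t) • v = 0 := by rw [this, sub_self]
    rw [← sub_smul] at h3
    simpa using h3
  have key : ∀ᵐ x, ‖f x - g x‖ ≤ r x := by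
    filter_upwards [hae, ae_not_sphere hn] with x ⟨p, hp, hc⟩ hx
    have hfx : f x = p ⬝ᵥ v := (hp.hasFDerivAt.hasLineDerivAt v).lineDeriv
    by_cases hxb : x ∈ ball (0 : Fin n → ℝ) 1
    · rw [hr, indicator_of_mem hxb]
      by_cases h1 : x ∈ SA
      · have h2 : x ∉ SB := fun h => hdis x h1 h
        rw [hg]
        simp only [indicator_of_mem h1, indicator_of_notMem h2]
        rw [hfx, hp.unique h1.2, smul_dotProduct, smul_eq_mul]
        simp only [hD, add_zero, sub_self, norm_zero]
        positivity
      · by_cases h2 : x ∈ SB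
        · rw [hg]
          simp only [indicator_of_mem h2, indicator_of_notMem h1]
          rw [hfx, hp.unique h2.2, smul_dotProduct, smul_eq_mul]
          simp only [hD, zero_add, sub_self, norm_zero]
          positivity
        · rw [hg]
          simp only [indicator_of_notMem h2, indicator_of_notMem h1]
          rw [hfx, add_zero, sub_zero, Real.norm_eq_abs]
          rcases hc with h | h | h
          · exact absurd ⟨hxb, h ▸ hp⟩ h1
          · exact absurd ⟨hxb, h ▸ hp⟩ h2
          · exact h v
    · have h1 : x ∉ SA := fun h => hxb h.1
      have h2 : x ∉ SB := fun h => hxb h.1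
      rw [hr, indicator_of_notMem hxb, hg]
      simp only [indicator_of_notMem h2, indicator_of_notMem h1]
      have hz : LS ψ x 0 := by
        refine ⟨0, ?_⟩
        have hxc : x ∉ closedBall (0 : Fin n → ℝ) 1 := by
          intro h
          rcases (mem_closedBall.1 h).lt_or_eq with h | h
          · exact hxb h
          · exact hx h
        filter_upwards [isClosed_closedBall.isOpen_compl.mem_nhds hxc] with y hy
        rw [h0 y fun h => hy (ball_subset_closedBall h)]
        simp
      rw [hfx, hp.unique hz]
      simp
  have if' : Integrable f volume := by
    have : Integrable (fun x => f x - g x) volume := by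
      refine ir.mono' ?_ key
      exact ((measurable_lineDeriv hL.continuous).aestronglyMeasurable).sub ig.1
    refine (this.add ig).congr (Eventually.of_forall fun x => ?_)
    simp
  have h1 := norm_integral_le_of_norm_le ir key
  rw [integral_sub if' ig, mean_zero hL h0 v, zero_sub, norm_neg, hg, integral_add iA iB,
    integral_indicator_const _ oA.measurableSet, integral_indicator_const _ oB.measurableSet,
    hr, integral_indicator_const _ measurableSet_ball, Real.norm_eq_abs] at h1
  simp only [smul_eq_mul] at h1
  convert h1 using 1
  · congr 1; ring
  · ring

theorem exists_psi {n : ℕ} (hn : 0 < n) {v : Fin n → ℝ} (hv : v ≠ 0) {t : ℝ} (h0 : 0 < t)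
    (h1 : t < 1) {ε : ℝ} (hε : 0 < ε) :
    ∃ ψ : (Fin n → ℝ) → ℝ, (∃ C, LipschitzWith C ψ) ∧
      (∀ x ∉ ball (0 : Fin n → ℝ) 1, ψ x = 0) ∧
      (∀ᵐ x, ∃ p, LS ψ x p ∧ (p = (1 - t) • v ∨ p = (-t) • v ∨ ∀ u, |p ⬝ᵥ u| ≤ ε * ‖u‖)) ∧
      volume.real {x | x ∈ ball (0 : Fin n → ℝ) 1 ∧ LS ψ x ((1 - t) • v)}
        ≤ t * volume.real (ball (0 : Fin n → ℝ) 1) + ε ∧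
      volume.real {x | x ∈ ball (0 : Fin n → ℝ) 1 ∧ LS ψ x ((-t) • v)}
        ≤ (1 - t) * volume.real (ball (0 : Fin n → ℝ) 1) + ε ∧
      volume.real (ball (0 : Fin n → ℝ) 1 \
        ({x | x ∈ ball (0 : Fin n → ℝ) 1 ∧ LS ψ x ((1 - t) • v)} ∪
        {x | x ∈ ball (0 : Fin n → ℝ) 1 ∧ LS ψ x ((-t) • v)})) ≤ ε := by
  set V := volume.real (ball (0 : Fin n → ℝ) 1) with hV
  have hV0 : 0 ≤ V := measureReal_nonneg
  have hD : 0 < v ⬝ᵥ v := by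
    rcases (Finset.sum_nonneg fun i _ => mul_self_nonneg (v i) : 0 ≤ v ⬝ᵥ v).lt_or_eq with h | h
    · exact h
    · exact absurd (dotProduct_self_eq_zero.1 h.symm) hv
  obtain ⟨δ, hδ, hδε, hδD⟩ : ∃ δ : ℝ, 0 < δ ∧ δ ≤ ε ∧ δ * ‖v‖ * V ≤ ε * (v ⬝ᵥ v) := by
    have hq : 0 < ‖v‖ * V + 1 := by positivity
    refine ⟨min ε (ε * (v ⬝ᵥ v) / (‖v‖ * V + 1)), by positivity, min_le_left _ _, ?_⟩
    have h2 := min_le_right ε (ε * (v ⬝ᵥ v) / (‖v‖ * V + 1))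
    rw [le_div_iff₀ hq] at h2
    have h3 : 0 < min ε (ε * (v ⬝ᵥ v) / (‖v‖ * V + 1)) := by positivity
    nlinarith
  obtain ⟨ρ, hρ, hρ1, hρε⟩ : ∃ ρ : ℝ, 0 < ρ ∧ ρ < 1 ∧ n * ρ * V ≤ ε := by
    have hq : 0 < n * V + 1 := by positivity
    refine ⟨min (1/2) (ε / (n * V + 1)), by positivity,
      (min_le_left _ _).trans_lt (by norm_num), ?_⟩
    have h2 := min_le_right (1/2) (ε / (n * V + 1))
    rw [le_div_iff₀ hq] at h2
    have h3 : 0 < min (1/2) (ε / (n * V + 1)) := by positivity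
    nlinarith
  set k : ℝ := 2 / (δ * ρ) with hk
  have hk0 : 0 < k := by positivity
  have hkδ : k⁻¹ < δ * ρ := by
    rw [hk, inv_div]
    have : 0 < δ * ρ := by positivity
    linarith
  set S : (Fin n → ℝ) → ℝ := fun x => k⁻¹ * saw t (k * (v ⬝ᵥ x)) with hS
  set ψ : (Fin n → ℝ) → ℝ := fun x => max ((0 : Fin n → ℝ) ⬝ᵥ x + 0) (min (S x) (δ * (1 - ‖x‖)))
    with hψ
  have hSn : ∀ x, 0 ≤ S x := fun x => mul_nonneg (inv_nonneg.2 hk0.le) (saw_nonneg h0 h1 _)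
  have hSl : ∀ x, S x ≤ k⁻¹ := fun x =>
    mul_le_of_le_one_right (inv_nonneg.2 hk0.le) (saw_le h0 h1 _)
  set Γ : Set (Fin n → ℝ) := {(1 - t) • v, (-t) • v} ∪ {p | ∀ u, |p ⬝ᵥ u| ≤ δ * ‖u‖} with hΓ
  have hPS := pa_saw hv h0 h1 hk0
  have hP : PA Γ ψ := by
    refine (PA.affine 0 (Or.inr ?_) 0).sup ((hPS.mono subset_union_left).inf
      ((pa_cone hn hδ).mono subset_union_right))
    intro u
    simp only [zero_dotProduct, abs_zero]
    positivity
  obtain ⟨⟨C, hC⟩, hae⟩ := hP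
  have hz : ∀ x ∉ ball (0 : Fin n → ℝ) 1, ψ x = 0 := by
    intro x hx
    have : 1 ≤ ‖x‖ := by simpa using hx
    simp only [hψ, zero_dotProduct, add_zero]
    refine max_eq_left ((min_le_right _ _).trans ?_)
    nlinarith
  have hae' : ∀ᵐ x, ∃ p, LS ψ x p ∧
      (p = (1 - t) • v ∨ p = (-t) • v ∨ ∀ u, |p ⬝ᵥ u| ≤ δ * ‖u‖) := by
    filter_upwards [hae] with x ⟨p, hp, hx⟩
    refine ⟨p, hx, ?_⟩
    rcases hp with (hp | hp) | hp
    · exact Or.inl hp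
    · exact Or.inr (Or.inl hp)
    · exact Or.inr (Or.inr hp)
  have hb := balance hn hv hC hz hae' hδ.le
  set SA := {x | x ∈ ball (0 : Fin n → ℝ) 1 ∧ LS ψ x ((1 - t) • v)} with hSA
  set SB := {x | x ∈ ball (0 : Fin n → ℝ) 1 ∧ LS ψ x ((-t) • v)} with hSB
  set α := volume.real SA with hα
  set β := volume.real SB with hβ
  have hdis : Disjoint SA SB := by
    rw [Set.disjoint_left]
    intro x h1 h2
    have := h1.2.unique h2.2
    apply hv
    have h3 : (1 - t) • v - (-t) • v = 0 := by rw [this, sub_self]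
    rw [← sub_smul] at h3
    simpa using h3
  have fA : volume SA ≠ ⊤ := ((measure_mono fun x hx => hx.1).trans_lt measure_ball_lt_top).ne
  have fB : volume SB ≠ ⊤ := ((measure_mono fun x hx => hx.1).trans_lt measure_ball_lt_top).ne
  have hsum : α + β ≤ V := by
    rw [hα, hβ, ← measureReal_union hdis (ls_isOpen _ _).measurableSet fA fB]
    exact measureReal_mono (union_subset (fun x hx => hx.1) fun x hx => hx.1)
      measure_ball_lt_top.ne
  have hb2 : |(1 - t) * α - t * β| ≤ ε := by
    rw [abs_mul, abs_of_pos hD] at hb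
    have := hb.trans hδD
    rw [mul_comm ε] at this
    exact le_of_mul_le_mul_left this hD
  have hb3 := abs_le.1 hb2
  refine ⟨ψ, ⟨C, hC⟩, hz, ?_, ?_, ?_, ?_⟩
  · filter_upwards [hae'] with x ⟨p, hp, hx⟩
    refine ⟨p, hp, hx.imp id (Or.imp id fun h u => (h u).trans ?_)⟩
    gcongr
  · nlinarith
  · nlinarith
  · have e1 : ∀ᵐ x, x ∈ ball (0 : Fin n → ℝ) 1 \ (SA ∪ SB) →
        x ∈ ball (0 : Fin n → ℝ) 1 \ ball (0 : Fin n → ℝ) (1 - ρ) := by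
      filter_upwards [hPS.2] with x ⟨p, hp, hx⟩ hxb
      refine ⟨hxb.1, fun hxr => hxb.2 ?_⟩
      have hl : LS ψ x p := by
        refine hx.congr ?_
        filter_upwards [isOpen_ball.mem_nhds hxr] with y hy
        have hy' : ‖y‖ < 1 - ρ := by simpa using hy
        have : S y ≤ δ * (1 - ‖y‖) := by
          have := hSl y
          nlinarith
        simp only [hψ, zero_dotProduct, add_zero]
        rw [min_eq_left this, max_eq_right (hSn y)]
      rcases hp with hp | hp
      · exact Or.inl ⟨hxb.1, hp ▸ hl⟩
      · exact Or.inr ⟨hxb.1, hp ▸ hl⟩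
    have e2 : volume (ball (0 : Fin n → ℝ) 1 \ (SA ∪ SB)) ≤
        volume (ball (0 : Fin n → ℝ) 1 \ ball (0 : Fin n → ℝ) (1 - ρ)) := measure_mono_ae e1
    have e3 : volume.real (ball (0 : Fin n → ℝ) 1 \ (SA ∪ SB)) ≤
        volume.real (ball (0 : Fin n → ℝ) 1 \ ball (0 : Fin n → ℝ) (1 - ρ)) :=
      ENNReal.toReal_mono (((measure_mono sdiff_subset).trans_lt measure_ball_lt_top).ne) e2
    refine e3.trans ?_
    rw [measureReal_sdiff (ball_subset_ball (by linarith)) measurableSet_ball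
      measure_ball_lt_top.ne]
    have e4 : volume.real (ball (0 : Fin n → ℝ) (1 - ρ)) = (1 - ρ) ^ n * V := by
      have := Measure.addHaar_ball_mul_of_pos (volume : Measure (Fin n → ℝ)) 0
        (by linarith : 0 < 1 - ρ) 1
      rw [mul_one] at this
      rw [Measure.real, this, ENNReal.toReal_mul, Module.finrank_fin_fun,
        ENNReal.toReal_ofReal (by have : 0 < 1 - ρ := by linarith
                                  positivity)]
      rfl
    have e5 := one_add_mul_le_pow (by linarith : -2 ≤ -ρ) n
    rw [← sub_eq_add_neg] at e5
    rw [e4]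
    nlinarith

end Aux

section Aux

open Metric Set Topology

theorem rank_one_decomp {N n : ℕ} {M : Mat N n} (h : M.rank = 1) :
    ∃ (a : Fin N → ℝ) (v : Fin n → ℝ), v ≠ 0 ∧ M = Matrix.vecMulVec a v := by
  obtain ⟨a, -, ha⟩ := finrank_eq_one_iff'.1 h
  have hj : ∀ j, ∃ c : ℝ, c • (a : Fin N → ℝ) = M.col j := by
    intro j
    obtain ⟨c, hc⟩ := ha ⟨M.mulVecLin (Pi.single j 1), LinearMap.mem_range_self _ _⟩
    refine ⟨c, ?_⟩
    have := congrArg Subtype.val hc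
    simpa using this
  choose c hc using hj
  have e : M = Matrix.vecMulVec a c := by
    ext i j
    have := congrFun (hc j) i
    simp only [Matrix.col_apply, Pi.smul_apply, smul_eq_mul] at this
    rw [Matrix.vecMulVec_apply, ← this, mul_comm]
  refine ⟨a, c, ?_, e⟩
  rintro rfl
  rw [e] at h
  have : Matrix.vecMulVec (a : Fin N → ℝ) (0 : Fin n → ℝ) = 0 := by
    ext i j
    simp [Matrix.vecMulVec_apply]
  rw [this, Matrix.rank_zero] at h
  exact zero_ne_one h

theorem LS.toLA {N n : ℕ} {ψ : (Fin n → ℝ) → ℝ} {x p : Fin n → ℝ} (h : LS ψ x p)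
    (a : Fin N → ℝ) : LA (fun y => ψ y • a) x (Matrix.vecMulVec a p) := by
  obtain ⟨c, hc⟩ := h
  refine ⟨c • a, ?_⟩
  filter_upwards [hc] with y hy
  rw [hy, Matrix.vecMulVec_mulVec]
  ext i
  simp
  ring

theorem small_vec {N n : ℕ} {K : Set (Mat N n)} (hK : IsOpen K) {ξ : Mat N n} (hξ : ξ ∈ K)
    (a : Fin N → ℝ) : ∃ e > 0, ∀ p : Fin n → ℝ, (∀ u, |p ⬝ᵥ u| ≤ e * ‖u‖) →
      ξ + Matrix.vecMulVec a p ∈ K := by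
  have hc : Continuous fun p : Fin n → ℝ => ξ + Matrix.vecMulVec a p := by
    refine continuous_const.add ?_
    refine continuous_matrix fun i j => ?_
    simp only [Matrix.vecMulVec_apply]
    fun_prop
  have ho := hK.preimage hc
  have h0 : (0 : Fin n → ℝ) ∈ (fun p : Fin n → ℝ => ξ + Matrix.vecMulVec a p) ⁻¹' K := by
    have : Matrix.vecMulVec a (0 : Fin n → ℝ) = 0 := by
      ext i j
      simp [Matrix.vecMulVec_apply]
    simpa [this] using hξ
  obtain ⟨r, hr, hb⟩ := Metric.isOpen_iff.1 ho 0 h0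
  refine ⟨r / 2, by positivity, fun p hp => hb ?_⟩
  rw [mem_ball_zero_iff]
  refine lt_of_le_of_lt ((pi_norm_le_iff_of_nonneg (by positivity : 0 ≤ r / 2)).2 fun j => ?_)
    (by linarith : r / 2 < r)
  have := hp (Pi.single j 1)
  have hs : ‖(Pi.single j 1 : Fin n → ℝ)‖ ≤ 1 := by
    refine (pi_norm_le_iff_of_nonneg zero_le_one).2 fun i => ?_
    by_cases h : i = j
    · subst h
      simp
    · simp [h]
  have h2 : |p j| ≤ r / 2 * ‖(Pi.single j 1 : Fin n → ℝ)‖ := by simpa using this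
  rw [Real.norm_eq_abs]
  nlinarith

/-- admissible perturbations on the unit ball -/
def Adm {N n : ℕ} (K : Set (Mat N n)) (ξ : Mat N n) (w : (Fin n → ℝ) → Fin N → ℝ) : Prop :=
  (∃ C, LipschitzWith C w) ∧ (∀ x ∉ ball (0 : Fin n → ℝ) 1, w x = 0) ∧
    ∀ᵐ x, ∃ A, LA w x A ∧ ξ + A ∈ K

/-- cost of a perturbation -/
noncomputable def cost {N n : ℕ} (E : Set (Mat N n)) (ξ : Mat N n)
    (w : (Fin n → ℝ) → Fin N → ℝ) : ENNReal :=
  ∫⁻ z in ball (0 : Fin n → ℝ) 1, ENNReal.ofReal (infDist (ξ + matGrad w z) E)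

/-- the relaxed cost at `ξ` is at most `c` -/
def QLe {N n : ℕ} (K E : Set (Mat N n)) (ξ : Mat N n) (c : ℝ) : Prop :=
  ∀ ε > 0, ∃ w, Adm K ξ w ∧
    cost E ξ w ≤ ENNReal.ofReal ((c + ε) * volume.real (ball (0 : Fin n → ℝ) 1))

theorem vol_pos {n : ℕ} : 0 < volume.real (ball (0 : Fin n → ℝ) 1) :=
  ENNReal.toReal_pos (measure_ball_pos _ _ one_pos).ne' measure_ball_lt_top.ne

theorem QLe.mono {N n : ℕ} {K E : Set (Mat N n)} {ξ : Mat N n} {c c' : ℝ} (h : QLe K E ξ c)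
    (hc : c ≤ c') : QLe K E ξ c' := by
  intro ε hε
  obtain ⟨w, hw, h⟩ := h ε hε
  refine ⟨w, hw, h.trans (ENNReal.ofReal_le_ofReal ?_)⟩
  have := @vol_pos n
  gcongr

theorem QLe.lim {N n : ℕ} {K E : Set (Mat N n)} {ξ : Mat N n} {c : ℝ}
    (h : ∀ ε > 0, QLe K E ξ (c + ε)) : QLe K E ξ c := by
  intro ε hε
  obtain ⟨w, hw, h⟩ := h (ε / 2) (by positivity) (ε / 2) (by positivity)
  refine ⟨w, hw, ?_⟩
  rwa [add_assoc, add_halves] at h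

theorem QLe.self {N n : ℕ} {K E : Set (Mat N n)} {ξ : Mat N n} (hξ : ξ ∈ K) :
    QLe K E ξ (infDist ξ E) := by
  intro ε hε
  have hl : ∀ x, LA (fun _ => 0 : (Fin n → ℝ) → Fin N → ℝ) x 0 := fun x =>
    LA.zero (Eventually.of_forall fun _ => rfl)
  refine ⟨fun _ => 0, ⟨⟨0, LipschitzWith.const _⟩, fun _ _ => rfl,
    Eventually.of_forall fun x => ⟨0, hl x, by simpa using hξ⟩⟩, ?_⟩
  unfold cost
  simp only [(hl _).matGrad_eq, add_zero, lintegral_const, Measure.restrict_apply_univ]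
  rw [ENNReal.ofReal_mul (by have := infDist_nonneg (x := ξ) (s := E); positivity),
    ofReal_measureReal measure_ball_lt_top.ne]
  gcongr
  linarith

theorem lint_bound {n : ℕ} {S : Set (Fin n → ℝ)} (hS : S ⊆ ball 0 1) {I c : ENNReal} {p : ℝ}
    (h : I * volume (ball (0 : Fin n → ℝ) 1) = volume S * c)
    (hc : c ≤ ENNReal.ofReal (p * volume.real (ball (0 : Fin n → ℝ) 1))) :
    I ≤ ENNReal.ofReal (volume.real S * p) := by
  have h1 : I * volume (ball (0 : Fin n → ℝ) 1) ≤
      ENNReal.ofReal (volume.real S * p) * volume (ball (0 : Fin n → ℝ) 1) := by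
    rw [h]
    refine (mul_le_mul_right hc _).trans ?_
    rw [← ofReal_measureReal (μ := volume) (s := S)
      ((measure_mono hS).trans_lt measure_ball_lt_top).ne,
      ← ofReal_measureReal (μ := volume) (s := ball (0 : Fin n → ℝ) 1) measure_ball_lt_top.ne,
      ← ENNReal.ofReal_mul measureReal_nonneg, ← ENNReal.ofReal_mul' measureReal_nonneg, mul_assoc]
  exact (ENNReal.mul_le_mul_iff_left (measure_ball_pos _ _ one_pos).ne'
    measure_ball_lt_top.ne).1 h1

theorem QLe.split {N n : ℕ} (hn : 0 < n) {K E : Set (Mat N n)} (hK : IsOpen K) {Dm : ℝ}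
    (hDm : ∀ ξ ∈ K, infDist ξ E ≤ Dm) {A B : Mat N n} (hr : (A - B).rank = 1) {t p q : ℝ}
    (h0 : 0 < t) (h1 : t < 1) (hξ : t • A + (1 - t) • B ∈ K)
    (hp : 0 ≤ p) (hq : 0 ≤ q) (hA : QLe K E A p) (hB : QLe K E B q) :
    QLe K E (t • A + (1 - t) • B) (t * p + (1 - t) * q) := by
  set ξ := t • A + (1 - t) • B with hξd
  intro ε hε
  set V := volume.real (ball (0 : Fin n → ℝ) 1) with hV
  have hV0 : 0 < V := vol_pos
  have hD0 : 0 ≤ Dm := infDist_nonneg.trans (hDm ξ hξ)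
  obtain ⟨a, v, hv, hav⟩ := rank_one_decomp hr
  obtain ⟨e0, he0, hsm⟩ := small_vec hK hξ a
  obtain ⟨e, he, hee, he1, hek⟩ : ∃ e : ℝ, 0 < e ∧ e ≤ e0 ∧ e ≤ 1 ∧
      e * (V + p + q + 2 + Dm) ≤ ε * V := by
    have hq : 0 < V + p + q + 2 + Dm := by positivity
    refine ⟨min e0 (min 1 (ε * V / (V + p + q + 2 + Dm))), by positivity, min_le_left _ _,
      (min_le_right _ _).trans (min_le_left _ _), ?_⟩
    rw [← le_div_iff₀ hq]
    exact (min_le_right _ _).trans (min_le_right _ _)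
  obtain ⟨wA, ⟨⟨LA', hLA⟩, zA, gA⟩, cA⟩ := hA e he
  obtain ⟨wB, ⟨⟨LB', hLB⟩, zB, gB⟩, cB⟩ := hB e he
  obtain ⟨ψ, ⟨C, hC⟩, hz, hae, hα, hβ, hγ⟩ := exists_psi hn hv h0 h1 he
  set SA := {x | x ∈ ball (0 : Fin n → ℝ) 1 ∧ LS ψ x ((1 - t) • v)} with hSA
  set SB := {x | x ∈ ball (0 : Fin n → ℝ) 1 ∧ LS ψ x ((-t) • v)} with hSB
  have oA : IsOpen SA := ls_isOpen _ _
  have oB : IsOpen SB := ls_isOpen _ _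
  have hdis : ∀ x, x ∈ SA → x ∉ SB := by
    intro x h1 h2
    have := h1.2.unique h2.2
    apply hv
    have h3 : (1 - t) • v - (-t) • v = 0 := by rw [this, sub_self]
    rw [← sub_smul] at h3
    simpa using h3
  obtain ⟨pA, lA, pzA, -, pgA, pcA⟩ := transplant hn hLA zA (fun M => A + M ∈ K) gA SA oA one_pos
  obtain ⟨pB, lB, pzB, -, pgB, pcB⟩ := transplant hn hLB zB (fun M => B + M ∈ K) gB SB oB one_pos
  set w : (Fin n → ℝ) → Fin N → ℝ := fun x => ψ x • a + (pA x + pB x) with hw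
  have eA : ξ + Matrix.vecMulVec a ((1 - t) • v) = A := by
    rw [Matrix.vecMulVec_smul, ← hav, hξd]
    module
  have eB : ξ + Matrix.vecMulVec a ((-t) • v) = B := by
    rw [Matrix.vecMulVec_smul, ← hav, hξd]
    module
  -- local structure
  have lSA : ∀ x ∈ SA, ∀ M, LA pA x M → ∃ G, LA w x G ∧ ξ + G = A + M := by
    intro x hx M hM
    refine ⟨_, (hx.2.toLA a).add (hM.add (LA.zero ?_)), ?_⟩
    · filter_upwards [oA.mem_nhds hx] with y hy
      exact pzB y (hdis y hy)
    · rw [← add_assoc, eA, add_zero]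
  have lSB : ∀ x ∈ SB, ∀ M, LA pB x M → ∃ G, LA w x G ∧ ξ + G = B + M := by
    intro x hx M hM
    refine ⟨_, (hx.2.toLA a).add (LA.add (LA.zero ?_) hM), ?_⟩
    · filter_upwards [oB.mem_nhds hx] with y hy
      exact pzA y fun h => hdis y h hy
    · rw [← add_assoc, eB, zero_add]
  have hall : ∀ᵐ x, ∃ G, LA w x G ∧ ξ + G ∈ K := by
    filter_upwards [pgA, pgB, hae, ae_not_sphere hn] with x h1 h2 ⟨p, hp, hc⟩ hs
    by_cases hxA : x ∈ SA
    · obtain ⟨M, hM, hg⟩ := h1 hxA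
      obtain ⟨G, hG, e⟩ := lSA x hxA M hM
      exact ⟨G, hG, e ▸ hg⟩
    by_cases hxB : x ∈ SB
    · obtain ⟨M, hM, hg⟩ := h2 hxB
      obtain ⟨G, hG, e⟩ := lSB x hxB M hM
      exact ⟨G, hG, e ▸ hg⟩
    by_cases hxb : x ∈ ball (0 : Fin n → ℝ) 1
    · have hpA : p ≠ (1 - t) • v := fun h => hxA ⟨hxb, h ▸ hp⟩
      have hpB : p ≠ (-t) • v := fun h => hxB ⟨hxb, h ▸ hp⟩
      have hps : ∀ u, |p ⬝ᵥ u| ≤ e * ‖u‖ := by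
        rcases hc with h | h | h
        · exact absurd h hpA
        · exact absurd h hpB
        · exact h
      refine ⟨_, (hp.toLA a).add (LA.add (LA.zero ?_) (LA.zero ?_)), ?_⟩
      · filter_upwards [hp.eventually] with y hy
        exact pzA y fun h => hpA (hy.unique h.2)
      · filter_upwards [hp.eventually] with y hy
        exact pzB y fun h => hpB (hy.unique h.2)
      · rw [add_zero, add_zero]
        refine hsm p fun u => (hps u).trans ?_
        gcongr
    · refine ⟨0, LA.zero ?_, by simpa using hξ⟩
      have hxc : x ∉ closedBall (0 : Fin n → ℝ) 1 := by
        intro h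
        rcases (mem_closedBall.1 h).lt_or_eq with h | h
        · exact hxb h
        · exact hs h
      filter_upwards [isClosed_closedBall.isOpen_compl.mem_nhds hxc] with y hy
      have hyb : y ∉ ball (0 : Fin n → ℝ) 1 := fun h => hy (ball_subset_closedBall h)
      simp only [hw]
      rw [hz y hyb, pzA y fun h => hyb h.1, pzB y fun h => hyb h.1]
      simp
  refine ⟨w, ⟨?_, ?_, hall⟩, ?_⟩
  · have : LipschitzWith (C * ‖a‖₊) fun x => ψ x • a := by
      refine LipschitzWith.of_dist_le_mul fun x y => ?_
      rw [dist_eq_norm, ← sub_smul, norm_smul, ← dist_eq_norm]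
      have := hC.dist_le_mul x y
      push_cast
      nlinarith [norm_nonneg a]
    exact ⟨_, this.add (lA.add lB)⟩
  · intro x hx
    simp only [hw]
    rw [hz x hx, pzA x fun h => hx h.1, pzB x fun h => hx h.1]
    simp
  · set Fc : (Fin n → ℝ) → ENNReal := fun z => ENNReal.ofReal (infDist (ξ + matGrad w z) E)
      with hFc
    have sA : SA ⊆ ball 0 1 := fun x hx => hx.1
    have sB : SB ⊆ ball 0 1 := fun x hx => hx.1
    have hU : ball (0 : Fin n → ℝ) 1 =
        SA ∪ SB ∪ (ball (0 : Fin n → ℝ) 1 \ (SA ∪ SB)) :=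
      (union_sdiff_cancel (union_subset sA sB)).symm
    have i1 : ∫⁻ z in SA, Fc z ≤ ENNReal.ofReal (volume.real SA * (p + e)) := by
      have e1 : ∫⁻ z in SA, Fc z =
          ∫⁻ z in SA, ENNReal.ofReal (infDist (A + matGrad pA z) E) := by
        refine setLIntegral_congr_fun_ae oA.measurableSet ?_
        filter_upwards [pgA] with x h1 hx
        obtain ⟨M, hM, -⟩ := h1 hx
        obtain ⟨G, hG, e⟩ := lSA x hx M hM
        simp only [hFc]
        rw [hG.matGrad_eq, hM.matGrad_eq, e]
      rw [e1]
      exact lint_bound sA (pcA fun M => ENNReal.ofReal (infDist (A + M) E)) cA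
    have i2 : ∫⁻ z in SB, Fc z ≤ ENNReal.ofReal (volume.real SB * (q + e)) := by
      have e1 : ∫⁻ z in SB, Fc z =
          ∫⁻ z in SB, ENNReal.ofReal (infDist (B + matGrad pB z) E) := by
        refine setLIntegral_congr_fun_ae oB.measurableSet ?_
        filter_upwards [pgB] with x h1 hx
        obtain ⟨M, hM, -⟩ := h1 hx
        obtain ⟨G, hG, e⟩ := lSB x hx M hM
        simp only [hFc]
        rw [hG.matGrad_eq, hM.matGrad_eq, e]
      rw [e1]
      exact lint_bound sB (pcB fun M => ENNReal.ofReal (infDist (B + M) E)) cB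
    have i3 : ∫⁻ z in ball (0 : Fin n → ℝ) 1 \ (SA ∪ SB), Fc z ≤ ENNReal.ofReal (Dm * e) := by
      calc ∫⁻ z in ball (0 : Fin n → ℝ) 1 \ (SA ∪ SB), Fc z
          ≤ ∫⁻ z in ball (0 : Fin n → ℝ) 1 \ (SA ∪ SB), ENNReal.ofReal Dm := by
            refine lintegral_mono_ae (ae_restrict_of_ae ?_)
            filter_upwards [hall] with x ⟨G, hG, hk⟩
            simp only [hFc]
            rw [hG.matGrad_eq]
            exact ENNReal.ofReal_le_ofReal (hDm _ hk)
        _ = ENNReal.ofReal Dm * volume (ball (0 : Fin n → ℝ) 1 \ (SA ∪ SB)) := by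
            rw [lintegral_const, Measure.restrict_apply_univ]
        _ ≤ _ := by
            rw [ENNReal.ofReal_mul hD0]
            gcongr
            rw [← ofReal_measureReal (μ := volume)
              (((measure_mono sdiff_subset).trans_lt measure_ball_lt_top).ne)]
            exact ENNReal.ofReal_le_ofReal hγ
    have hα0 : 0 ≤ volume.real SA := measureReal_nonneg
    have hβ0 : 0 ≤ volume.real SB := measureReal_nonneg
    calc cost E ξ w = ∫⁻ z in ball (0 : Fin n → ℝ) 1, Fc z := rfl
      _ ≤ (∫⁻ z in SA, Fc z) + (∫⁻ z in SB, Fc z) +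
          ∫⁻ z in ball (0 : Fin n → ℝ) 1 \ (SA ∪ SB), Fc z := by
          conv_lhs => rw [hU]
          refine (lintegral_union_le _ _ _).trans ?_
          gcongr
          exact lintegral_union_le _ _ _
      _ ≤ ENNReal.ofReal (volume.real SA * (p + e)) + ENNReal.ofReal (volume.real SB * (q + e))
          + ENNReal.ofReal (Dm * e) := by gcongr
      _ = ENNReal.ofReal (volume.real SA * (p + e) + volume.real SB * (q + e) + Dm * e) := by
          rw [ENNReal.ofReal_add (by positivity) (by positivity),
            ENNReal.ofReal_add (by positivity) (by positivity)]
      _ ≤ _ := by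
          refine ENNReal.ofReal_le_ofReal ?_
          have j1 := mul_le_mul_of_nonneg_right hα (by positivity : 0 ≤ p + e)
          have j2 := mul_le_mul_of_nonneg_right hβ (by positivity : 0 ≤ q + e)
          nlinarith

end Aux

section Aux

open Metric Set Topology

theorem rank_smul_one {N n : ℕ} {c : ℝ} (hc : c ≠ 0) (B : Mat N n) : (c • B).rank = B.rank :=
  Matrix.rank_smul_of_mem_nonZeroDivisors B (mem_nonZeroDivisors_of_ne_zero hc)

theorem exists_rank_one {N n : ℕ} (hN : 0 < N) (hn : 0 < n) : ∃ B : Mat N n, B.rank = 1 := by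
  have hle := Matrix.rank_vecMulVec_le (Pi.single ⟨0, hN⟩ 1 : Fin N → ℝ)
    (Pi.single ⟨0, hn⟩ 1 : Fin n → ℝ)
  refine ⟨_, le_antisymm hle (Nat.one_le_iff_ne_zero.2 fun h => ?_)⟩
  have h1 := LinearMap.range_eq_bot.1 (Submodule.finrank_eq_zero.1 h)
  have h2 := congrFun (LinearMap.congr_fun h1 (Pi.single ⟨0, hn⟩ 1)) ⟨0, hN⟩
  simp [Matrix.vecMulVec_apply] at h2

theorem chain {N n : ℕ} (hn : 0 < n) {K E : Set (Mat N n)} (hK : IsOpen K) {Dm : ℝ}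
    (hDm : ∀ ξ ∈ K, infDist ξ E ≤ Dm) {U C : Set (Mat N n)} (hU : Convex ℝ U) (hUK : U ⊆ K)
    (hC : Convex ℝ C) (hCU : C ⊆ U) {q0 S : ℝ} (hq0 : 0 ≤ q0) (hS : 0 ≤ S)
    (hQ : ∀ y ∈ C, QLe K E y S) {x0 : Mat N n} (hx0 : x0 ∈ U) (hQ0 : QLe K E x0 q0)
    {ι : Type} (m : ι → Mat N n) (s : Finset ι) :
    (∀ i ∈ s, m i ∈ C ∧ (x0 - m i).rank = 1) → ∀ (t : ℝ) (f : ι → ℝ), 0 < t →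
      (∀ i ∈ s, 0 ≤ f i) → t + ∑ i ∈ s, f i = 1 →
      t • x0 + ∑ i ∈ s, f i • m i ∈ U ∧
      QLe K E (t • x0 + ∑ i ∈ s, f i • m i) (t * q0 + (1 - t) * S) := by
  induction s using Finset.induction_on with
  | empty =>
    intro _ t f _ _ ht
    simp only [Finset.sum_empty, add_zero] at ht ⊢
    subst ht
    simpa using ⟨hx0, hQ0⟩
  | insert i s hi ih =>
    intro hm t f ht hf hsum
    rw [Finset.sum_insert hi] at hsum ⊢
    have hm' := fun j hj => hm j (Finset.mem_insert_of_mem hj)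
    have hf' := fun j hj => hf j (Finset.mem_insert_of_mem hj)
    have hfi := hf i (Finset.mem_insert_self i s)
    have hsn : 0 ≤ ∑ j ∈ s, f j := Finset.sum_nonneg hf'
    obtain ⟨aU, aQ⟩ := ih hm' (t + f i) f (by positivity) hf' (by rw [← hsum]; ring)
    rcases hfi.eq_or_lt with h0 | h0
    · rw [← h0] at aU aQ ⊢
      rw [add_zero] at aU aQ
      rw [zero_smul, zero_add]
      exact ⟨aU, aQ⟩
    set A := (t + f i) • x0 + ∑ j ∈ s, f j • m j with hA
    set B := (t + f i) • m i + ∑ j ∈ s, f j • m j with hB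
    have hBC : B ∈ C := by
      have e : ∀ j ∈ s, Function.update f i (t + f i) j = f j := fun j hj =>
        Function.update_of_ne (fun h => hi (by rwa [← h])) _ _
      have := hC.sum_mem (t := insert i s) (w := Function.update f i (t + f i)) (z := m) ?_ ?_
        (fun j hj => (hm j hj).1)
      · rw [Finset.sum_insert hi, Function.update_self,
          Finset.sum_congr rfl fun j hj => by rw [e j hj]] at this
        exact this
      · intro j hj
        rcases Finset.mem_insert.1 hj with h | h
        · subst h
          rw [Function.update_self]
          positivity
        · rw [e j h]
          exact hf' j h
      · rw [Finset.sum_insert hi, Function.update_self, Finset.sum_congr rfl e, ← hsum]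
        ring
    have htp : 0 < t + f i := by positivity
    have eη : t • x0 + (f i • m i + ∑ j ∈ s, f j • m j)
        = (t / (t + f i)) • A + (1 - t / (t + f i)) • B := by
      have e1 : (1 - t / (t + f i)) = f i / (t + f i) := by field_simp; ring
      have e2 : (t / (t + f i)) • A + (f i / (t + f i)) • B =
        ((t / (t + f i)) * (t + f i)) • x0 + (((f i / (t + f i)) * (t + f i)) • m i +
          ((t / (t + f i)) + f i / (t + f i)) • ∑ j ∈ s, f j • m j) := by
        rw [hA, hB]
        module
      rw [e1, e2, div_mul_cancel₀ _ htp.ne', div_mul_cancel₀ _ htp.ne', ← add_div,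
        div_self htp.ne', one_smul]
    have hτ0 : 0 < t / (t + f i) := by positivity
    have hτ1 : t / (t + f i) < 1 := by
      rw [div_lt_one htp]
      linarith
    have hηU : t • x0 + (f i • m i + ∑ j ∈ s, f j • m j) ∈ U := by
      rw [eη]
      exact hU aU (hCU hBC) hτ0.le (by linarith) (by ring)
    refine ⟨hηU, ?_⟩
    have hr : (A - B).rank = 1 := by
      have : A - B = (t + f i) • (x0 - m i) := by
        rw [hA, hB]
        module
      rw [this, rank_smul_one htp.ne']
      exact (hm i (Finset.mem_insert_self i s)).2
    rw [eη] at hηU ⊢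
    have := QLe.split hn hK hDm hr hτ0 hτ1 (hUK hηU)
      (by have : 0 ≤ 1 - (t + f i) := by linarith
          positivity) hS aQ (hQ B hBC)
    convert this using 1
    field_simp
    ring

theorem sphere_step {N n : ℕ} (hn : 0 < n) {K E : Set (Mat N n)} (hK : IsOpen K) {Dm : ℝ}
    (hDm : ∀ ξ ∈ K, infDist ξ E ≤ Dm) {ξ : Mat N n} (hξ : ξ ∈ E) {M : Set (Mat N n)}
    (hM : M.Finite) (hM1 : ∀ η ∈ M, (η - ξ).rank = 1) {r R : ℝ} (hr : r < 1/2) (hR : 1/2 ≤ R)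
    (hMr : ∀ η ∈ M, ‖η‖ ≤ r) (hξR : ‖ξ‖ ≤ R)
    (hHK : interior (convexHull ℝ ({ξ} ∪ M)) ⊆ K) {S : ℝ} (hS : 0 ≤ S)
    (hQ : ∀ y ∈ K, QLe K E y S) {η : Mat N n} (hη : η ∈ interior (convexHull ℝ ({ξ} ∪ M)))
    (hηn : 1/2 ≤ ‖η‖) : QLe K E η ((1 - (1/2 - r) / (R - r)) * S) := by
  set H := convexHull ℝ ({ξ} ∪ M) with hH
  have hHc : Convex ℝ H := convex_convexHull ℝ _
  set s := hM.toFinset with hs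
  have hξs : ξ ∉ s := by
    intro h
    have := hM1 ξ (by simpa [hs] using h)
    rw [sub_self, Matrix.rank_zero] at this
    exact zero_ne_one this
  have hcoe : ((insert ξ s : Finset (Mat N n)) : Set (Mat N n)) = {ξ} ∪ M := by
    rw [Finset.coe_insert, hs, hM.coe_toFinset]
    rfl
  have hηH : η ∈ convexHull ℝ ((insert ξ s : Finset (Mat N n)) : Set (Mat N n)) := by
    rw [hcoe]
    exact interior_subset hη
  obtain ⟨w, hw0, hw1, hwη⟩ := Finset.mem_convexHull'.1 hηH
  rw [Finset.sum_insert hξs] at hw1 hwη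
  set t := w ξ with ht
  have ht0 : 0 ≤ t := hw0 ξ (Finset.mem_insert_self _ _)
  have hw0' := fun j hj => hw0 j (Finset.mem_insert_of_mem hj)
  have hRr : 0 < R - r := by linarith
  have htl : (1/2 - r) / (R - r) ≤ t := by
    rw [div_le_iff₀ hRr]
    have h1 : ‖∑ y ∈ s, w y • y‖ ≤ ∑ y ∈ s, w y * r := by
      refine norm_sum_le_of_le _ fun y hy => ?_
      rw [norm_smul, Real.norm_of_nonneg (hw0' y hy)]
      exact mul_le_mul_of_nonneg_left (hMr y (by simpa [hs] using hy)) (hw0' y hy)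
    rw [← Finset.sum_mul] at h1
    have h2 : ‖η‖ ≤ t * ‖ξ‖ + ‖∑ y ∈ s, w y • y‖ := by
      rw [← hwη]
      refine (norm_add_le _ _).trans ?_
      rw [norm_smul, Real.norm_of_nonneg ht0]
    have h3 : ∑ y ∈ s, w y = 1 - t := by linarith
    rw [h3] at h1
    nlinarith
  have htp : 0 < t := lt_of_lt_of_le (div_pos (by linarith) hRr) htl
  have ht1 : t ≤ 1 := by
    have := Finset.sum_nonneg hw0'
    linarith
  refine QLe.lim fun ε hε => ?_
  obtain ⟨δ, hδ, hδ1, hδr, hδε⟩ : ∃ δ : ℝ, 0 < δ ∧ δ < 1 ∧ r + δ * ‖η‖ < 1/2 ∧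
      δ * ‖η - ξ‖ ≤ ε := by
    have p1 : 0 < ‖η‖ + 1 := by positivity
    have p2 : 0 < ‖η - ξ‖ + 1 := by positivity
    have p3 : 0 < 1/2 - r := by linarith
    set δ := min (1/2) (min ((1/2 - r) / (‖η‖ + 1)) (ε / (‖η - ξ‖ + 1))) with hδ
    have hδ0 : 0 < δ := by positivity
    have q1 : δ ≤ (1/2 - r) / (‖η‖ + 1) := (min_le_right _ _).trans (min_le_left _ _)
    have q2 : δ ≤ ε / (‖η - ξ‖ + 1) := (min_le_right _ _).trans (min_le_right _ _)
    rw [le_div_iff₀ p1] at q1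
    rw [le_div_iff₀ p2] at q2
    exact ⟨δ, hδ0, (min_le_left _ _).trans_lt (by norm_num), by nlinarith, by nlinarith⟩
  set h : Mat N n → Mat N n := fun x => (1 - δ) • x + δ • η with hh
  have hmem : ∀ x ∈ H, h x ∈ interior H := fun x hx =>
    hHc.combo_self_interior_mem_interior hx hη (by linarith) hδ (by ring)
  have hξH : ξ ∈ H := subset_convexHull ℝ _ (Or.inl rfl)
  have hMH : ∀ y ∈ M, y ∈ H := fun y hy => subset_convexHull ℝ _ (Or.inr hy)
  have hx0K := hHK (hmem ξ hξH)
  have hrn : 0 ≤ δ * ‖η‖ := by positivity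
  have key := chain hn hK hDm (U := interior H) (C := interior H ∩ ball 0 (1/2)) hHc.interior hHK
    (hHc.interior.inter (convex_ball _ _)) inter_subset_left (infDist_nonneg (x := h ξ) (s := E))
    hS (fun y hy => hQ y (hHK hy.1)) (hmem ξ hξH) (QLe.self hx0K) h s (by
      intro y hy
      have hyM : y ∈ M := by simpa [hs] using hy
      refine ⟨⟨hmem y (hMH y hyM), ?_⟩, ?_⟩
      · rw [mem_ball_zero_iff]
        have : ‖h y‖ ≤ (1 - δ) * ‖y‖ + δ * ‖η‖ := by
          refine (norm_add_le _ _).trans ?_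
          rw [norm_smul, norm_smul, Real.norm_of_nonneg hδ.le,
            Real.norm_of_nonneg (by linarith : 0 ≤ 1 - δ)]
        have := hMr y hyM
        have := norm_nonneg y
        nlinarith
      · have e : h ξ - h y = (-(1 - δ)) • (y - ξ) := by
          simp only [hh]
          module
        rw [e, rank_smul_one (by linarith)]
        exact hM1 y hyM) t w htp hw0' hw1
  have eη : t • h ξ + ∑ i ∈ s, w i • h i = η := by
    have e1 : ∑ i ∈ s, w i • h i = (1 - δ) • ∑ i ∈ s, w i • i + (∑ i ∈ s, w i) • (δ • η) := by
      rw [Finset.smul_sum, Finset.sum_smul, ← Finset.sum_add_distrib]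
      refine Finset.sum_congr rfl fun i _ => ?_
      simp only [hh]
      module
    have e2 : ∑ y ∈ s, w y = 1 - t := by linarith
    have e3 : ∑ i ∈ s, w i • i = η - t • ξ := by rw [← hwη]; abel
    rw [e1, e2, e3]
    simp only [hh]
    module
  rw [eη] at key
  refine key.2.mono ?_
  have hq : infDist (h ξ) E ≤ ε := by
    refine (infDist_le_dist_of_mem hξ).trans ?_
    have e : h ξ - ξ = δ • (η - ξ) := by
      simp only [hh]
      module
    rw [dist_eq_norm, e, norm_smul, Real.norm_of_nonneg hδ.le]
    exact hδε
  have hq' : 0 ≤ infDist (h ξ) E := infDist_nonneg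
  nlinarith

theorem exists_hit {N n : ℕ} {B η : Mat N n} (hB : B ≠ 0) (hη : ‖η‖ < 1/2) :
    ∃ s > (0:ℝ), ‖η + s • B‖ = 1/2 := by
  have hB' : 0 < ‖B‖ := norm_pos_iff.2 hB
  have hc : Continuous fun s : ℝ => ‖η + s • B‖ := by fun_prop
  have hp : (0:ℝ) ≤ 1 / ‖B‖ := by positivity
  have h1 : 1/2 ≤ ‖η + (1 / ‖B‖) • B‖ := by
    have := norm_sub_le (η + (1 / ‖B‖) • B) η
    rw [add_sub_cancel_left, norm_smul, Real.norm_of_nonneg hp, one_div,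
      inv_mul_cancel₀ hB'.ne'] at this
    rw [one_div ‖B‖]
    linarith
  obtain ⟨s, hs, h⟩ := intermediate_value_Icc hp hc.continuousOn (show (1/2 : ℝ) ∈ _ from
    ⟨by simpa using hη.le, h1⟩)
  refine ⟨s, lt_of_le_of_ne hs.1 ?_, h⟩
  rintro rfl
  simp only [zero_smul, add_zero] at h
  linarith

theorem ball_step {N n : ℕ} (hN : 0 < N) (hn : 0 < n) {K E : Set (Mat N n)} (hK : IsOpen K)
    {Dm : ℝ} (hDm : ∀ ξ ∈ K, infDist ξ E ≤ Dm) {c : ℝ} (hc : 0 ≤ c)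
    (hQ : ∀ y : Mat N n, ‖y‖ = 1/2 → QLe K E y c) {η : Mat N n} (hηK : η ∈ K)
    (hη : ‖η‖ < 1/2) : QLe K E η c := by
  obtain ⟨B, hB⟩ := exists_rank_one hN hn
  have hB0 : B ≠ 0 := by
    rintro rfl
    rw [Matrix.rank_zero] at hB
    exact zero_ne_one hB
  obtain ⟨s, hs, h1⟩ := exists_hit hB0 hη
  obtain ⟨s', hs', h2⟩ := exists_hit (neg_ne_zero.2 hB0) hη
  have hp : 0 < s + s' := by positivity
  have e : (s' / (s + s')) • (η + s • B) + (1 - s' / (s + s')) • (η + s' • -B) = η := by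
    have e1 : 1 - s' / (s + s') = s / (s + s') := by field_simp; ring
    have e2 : (s' / (s + s')) • (η + s • B) + (s / (s + s')) • (η + s' • -B)
      = ((s' / (s + s')) + s / (s + s')) • η := by
      match_scalars
      · ring
      · ring
    rw [e1, e2, ← add_div, add_comm s', div_self hp.ne', one_smul]
  have := QLe.split hn hK hDm (A := η + s • B) (B := η + s' • -B) (t := s' / (s + s'))
    (by
      have : (η + s • B) - (η + s' • -B) = (s + s') • B := by module
      rw [this, rank_smul_one hp.ne', hB]) (by positivity)
    (by rw [div_lt_one hp]; linarith) (by rw [e]; exact hηK) hc hc (hQ _ h1) (hQ _ h2)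
  rw [e] at this
  refine this.mono ?_
  apply le_of_eq
  ring

theorem exists_radius {N n : ℕ} {T : Set (Mat N n)} (hT : T.Finite)
    (h : ∀ η ∈ T, ‖η‖ < 1/2) : ∃ r < 1/2, ∀ η ∈ T, ‖η‖ ≤ r := by
  rcases T.eq_empty_or_nonempty with rfl | hne
  · exact ⟨0, by norm_num, by simp⟩
  · obtain ⟨a, ha, hm⟩ := Set.exists_max_image T (fun x => ‖x‖) hT hne
    exact ⟨‖a‖, h a ha, hm⟩

theorem relax_of_qle {N n : ℕ} (hn : 0 < n) {K E : Set (Mat N n)} {R : ℝ}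
    (hR : ∀ ξ ∈ K, ‖ξ‖ ≤ R) (hQ : ∀ ξ ∈ K, QLe K E ξ 0) : HasRelaxationProperty K E := by
  intro Ω hΩ hΩb ξ hξ b
  set V := volume.real (ball (0 : Fin n → ℝ) 1) with hV
  have hV0 : 0 < V := vol_pos
  set L : NNReal := Real.toNNReal (n * (R + ‖ξ‖)) with hL
  have hνp : ∀ ν : ℕ, (0:ℝ) < 1 / (ν + 1) := fun ν => by positivity
  have H : ∀ ν : ℕ, ∃ p : (Fin n → ℝ) → Fin N → ℝ, LipschitzWith (2 * L) p ∧
      (∀ z ∉ Ω, p z = 0) ∧ (∀ z, ‖p z‖ ≤ (1 / (ν + 1) : ℝ) * (2 * L)) ∧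
      (∀ᵐ z, z ∈ Ω → ∃ A, LA p z A ∧ ξ + A ∈ K) ∧
      (∫⁻ z in Ω, ENNReal.ofReal (infDist (ξ + matGrad p z) E)) ≤
        ENNReal.ofReal (volume.real Ω * (1 / (ν + 1))) := by
    intro ν
    obtain ⟨w, ⟨⟨C, hC⟩, hz, hg⟩, hc⟩ := hQ ξ hξ _ (hνp ν)
    have hLw : LipschitzWith L w := by
      refine lipschitz_of_ae hC ?_
      filter_upwards [hg] with x ⟨A, hA, hk⟩
      refine ⟨A, hA, ?_⟩
      have h1 := norm_sub_le (ξ + A) ξ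
      rw [add_sub_cancel_left] at h1
      have := hR _ hk
      linarith
    obtain ⟨p, p1, p2, p3, p4, p5⟩ := transplant hn hLw hz (fun A => ξ + A ∈ K) hg Ω hΩ (hνp ν)
    refine ⟨p, p1, p2, p3, p4, ?_⟩
    have h := p5 fun A => ENNReal.ofReal (infDist (ξ + A) E)
    rw [zero_add] at hc
    have h1 : (∫⁻ z in Ω, ENNReal.ofReal (infDist (ξ + matGrad p z) E)) *
        volume (ball (0 : Fin n → ℝ) 1) ≤
        ENNReal.ofReal (volume.real Ω * (1 / (ν + 1))) * volume (ball (0 : Fin n → ℝ) 1) := by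
      rw [h]
      refine (mul_le_mul_right hc _).trans ?_
      rw [← ofReal_measureReal (μ := volume) (s := Ω) hΩb.measure_lt_top.ne,
        ← ofReal_measureReal (μ := volume) (s := ball (0 : Fin n → ℝ) 1) measure_ball_lt_top.ne,
        ← ENNReal.ofReal_mul measureReal_nonneg, ← ENNReal.ofReal_mul' measureReal_nonneg,
        mul_assoc]
    exact (ENNReal.mul_le_mul_iff_left (measure_ball_pos _ _ one_pos).ne'
      measure_ball_lt_top.ne).1 h1
  choose p p1 p2 p3 p4 p5 using H
  set u : ℕ → (Fin n → ℝ) → Fin N → ℝ := fun ν x => (ξ.mulVec x + b) + p ν x with hu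
  have hla : ∀ ν, ∀ᵐ z, z ∈ Ω → ∃ A, LA (p ν) z A ∧ LA (u ν) z (ξ + A) ∧ ξ + A ∈ K := by
    intro ν
    filter_upwards [p4 ν] with z hz hzΩ
    obtain ⟨A, hA, hk⟩ := hz hzΩ
    exact ⟨A, hA, (LA.affine ξ b z).add hA, hk⟩
  obtain ⟨D, hD⟩ : ∃ D, LipschitzWith D fun x => ξ.mulVec x + b :=
    ⟨_, ((Matrix.toLin' ξ).toContinuousLinearMap.lipschitz).add (LipschitzWith.const b)⟩
  have hlip : ∀ ν, LipschitzWith (D + 2 * L) (u ν) := fun ν => hD.add (p1 ν)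
  refine ⟨u, fun ν => ?_, fun ν => ⟨⟨_, (hlip ν).lipschitzOnWith⟩, ?_⟩, fun ν => ?_,
    ⟨_, fun ν => (hlip ν).lipschitzOnWith⟩, ?_, ?_⟩
  · refine piecewise_of_ae (hlip ν).continuous hΩ ?_
    filter_upwards [hla ν] with z hz hzΩ
    obtain ⟨A, -, hA, -⟩ := hz hzΩ
    exact ⟨_, hA⟩
  · intro x hx
    have : x ∉ Ω := by
      rw [hΩ.frontier_eq] at hx
      exact hx.2
    simp only [hu]
    rw [p2 ν x this, add_zero]
  · rw [ae_restrict_iff' hΩ.measurableSet]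
    filter_upwards [hla ν] with z hz hzΩ
    obtain ⟨A, -, hA, hk⟩ := hz hzΩ
    rw [hA.matGrad_eq]
    exact Or.inr hk
  · rw [Metric.tendstoUniformlyOn_iff]
    intro ε hε
    have ht : Tendsto (fun ν : ℕ => (1 / (ν + 1) : ℝ) * (2 * L)) atTop (𝓝 0) := by
      simpa using (tendsto_one_div_add_atTop_nhds_zero_nat (𝕜 := ℝ)).mul_const (2 * (L:ℝ))
    filter_upwards [ht.eventually_lt_const hε] with ν hν x _
    rw [dist_comm, dist_eq_norm]
    simp only [hu, add_sub_cancel_left]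
    exact (p3 ν x).trans_lt hν
  · have ht : Tendsto (fun ν : ℕ => volume.real Ω * (1 / (ν + 1) : ℝ)) atTop (𝓝 0) := by
      simpa using (tendsto_one_div_add_atTop_nhds_zero_nat (𝕜 := ℝ)).const_mul (volume.real Ω)
    refine squeeze_zero_norm (fun ν => ?_) ht
    refine (norm_integral_le_lintegral_norm _).trans ?_
    refine ENNReal.toReal_le_of_le_ofReal (by positivity) (le_trans (le_of_eq ?_) (p5 ν))
    refine setLIntegral_congr_fun_ae hΩ.measurableSet ?_
    filter_upwards [hla ν] with z hz hzΩ
    obtain ⟨A, hA, hA', -⟩ := hz hzΩ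
    rw [hA.matGrad_eq, hA'.matGrad_eq, Real.norm_of_nonneg infDist_nonneg]

end Aux


section Statements

open Metric Set

theorem stmt18 {N n : ℕ} (hN : 2 ≤ N) (hn : 2 ≤ n) (m : ℕ) (ξs : Fin m → Mat N n)
    (E : Set (Mat N n)) (hE : E = Set.range ξs)
    (hdist : ∀ ξ ∈ E, 0 < Metric.infDist ξ (Metric.ball (0 : Mat N n) (1/2)))
    (M : Mat N n → Set (Mat N n))
    (hM1 : ∀ ξ ∈ E, M ξ ⊆ {η : Mat N n | (η - ξ).rank = 1})
    (hM2 : ∀ ξ ∈ E, M ξ ⊆ Metric.ball (0 : Mat N n) (1/2) ∧ (M ξ).Finite ∧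
      (M ξ).ncard < 4 * N * n)
    (hM3 : Metric.sphere (0 : Mat N n) (1/2) ⊆
      ⋃ ξ ∈ E, interior (convexHull ℝ ({ξ} ∪ M ξ)))
    (K : Set (Mat N n))
    (hKdef : K = Metric.ball (0 : Mat N n) (1/2) ∪
      ⋃ ξ ∈ E, interior (convexHull ℝ ({ξ} ∪ M ξ))) :
    IsOpen K ∧ Bornology.IsBounded K ∧ HasRelaxationProperty K E := by
  have hKo : IsOpen K := by
    rw [hKdef]
    exact isOpen_ball.union (isOpen_biUnion fun _ _ => isOpen_interior)
  have hEf : E.Finite := by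
    rw [hE]
    exact Set.finite_range ξs
  have hKb : Bornology.IsBounded K := by
    rw [hKdef]
    refine isBounded_ball.union ((Bornology.isBounded_biUnion hEf).2 fun ξ hξ => ?_)
    refine Bornology.IsBounded.subset ?_ interior_subset
    exact isBounded_convexHull.2 (((Set.finite_singleton ξ).union (hM2 ξ hξ).2.1).isBounded)
  refine ⟨hKo, hKb, ?_⟩
  have hn0 : 0 < n := by omega
  have hN0 : 0 < N := by omega
  obtain ⟨RK, hRK⟩ := hKb.exists_norm_le
  refine relax_of_qle hn0 hRK ?_
  obtain ⟨RE, hRE⟩ := hEf.isBounded.exists_norm_le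
  set R := max RE 1 with hR
  obtain ⟨r, hr, hrM⟩ := exists_radius (T := ⋃ ξ ∈ E, M ξ)
    (hEf.biUnion fun ξ hξ => (hM2 ξ hξ).2.1) (by
      intro η hη
      obtain ⟨ξ, hξ, h⟩ := mem_iUnion₂.1 hη
      simpa using (hM2 ξ hξ).1 h)
  have hR1 : 1/2 ≤ R := le_trans (by norm_num) (le_max_right RE 1)
  have hRr : 0 < R - r := by linarith
  have hHK : ∀ ξ ∈ E, interior (convexHull ℝ ({ξ} ∪ M ξ)) ⊆ K := by
    intro ξ hξ
    rw [hKdef]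
    exact (subset_biUnion_of_mem (u := fun ξ => interior (convexHull ℝ ({ξ} ∪ M ξ))) hξ).trans
      subset_union_right
  have hout : ∀ η ∈ K, 1/2 ≤ ‖η‖ → ∃ ξ ∈ E, η ∈ interior (convexHull ℝ ({ξ} ∪ M ξ)) := by
    intro η hη hn
    rw [hKdef] at hη
    rcases hη with h | h
    · rw [mem_ball_zero_iff] at h
      linarith
    · obtain ⟨ξ, hξ, h⟩ := mem_iUnion₂.1 h
      exact ⟨ξ, hξ, h⟩
  have hsK : ∀ y : Mat N n, ‖y‖ = 1/2 → y ∈ K := by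
    intro y hy
    rw [hKdef]
    exact Or.inr (hM3 (by simpa using hy))
  obtain ⟨Dm, hDm0, hDm⟩ : ∃ Dm : ℝ, 0 ≤ Dm ∧ ∀ ξ ∈ K, infDist ξ E ≤ Dm := by
    rcases E.eq_empty_or_nonempty with he | ⟨ξ0, h0⟩
    · exact ⟨0, le_rfl, fun ξ _ => by rw [he, infDist_empty]⟩
    · refine ⟨max 0 (RK + ‖ξ0‖), le_max_left _ _, fun ξ hξ => ?_⟩
      refine (infDist_le_dist_of_mem h0).trans ?_
      rw [dist_eq_norm]
      refine (norm_sub_le _ _).trans (le_trans ?_ (le_max_right _ _))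
      linarith [hRK ξ hξ]
  set θ := 1 - (1/2 - r) / (R - r) with hθ
  have hθ1 : θ < 1 := by
    have : 0 < (1/2 - r) / (R - r) := div_pos (by linarith) hRr
    linarith
  have hθ0 : 0 ≤ θ := by
    have : (1/2 - r) / (R - r) ≤ 1 := by
      rw [div_le_one hRr]
      linarith
    linarith
  have step : ∀ S : ℝ, 0 ≤ S → (∀ ξ ∈ K, QLe K E ξ S) → ∀ ξ ∈ K, QLe K E ξ (θ * S) := by
    intro S hS hQ
    have h1 : ∀ η ∈ K, 1/2 ≤ ‖η‖ → QLe K E η (θ * S) := by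
      intro η hη hn
      obtain ⟨ξ, hξ, h⟩ := hout η hη hn
      exact sphere_step hn0 hKo hDm hξ (hM2 ξ hξ).2.1 (hM1 ξ hξ) hr hR1
        (fun y hy => hrM y (mem_iUnion₂.2 ⟨ξ, hξ, hy⟩))
        ((hRE ξ hξ).trans (le_max_left _ _)) (hHK ξ hξ) hS hQ h hn
    intro η hη
    rcases le_or_gt (1/2) ‖η‖ with h | h
    · exact h1 η hη h
    · exact ball_step hN0 hn0 hKo hDm (mul_nonneg hθ0 hS)
        (fun y hy => h1 y (hsK y hy) hy.ge) hη h
  have iter : ∀ k : ℕ, ∀ ξ ∈ K, QLe K E ξ (θ ^ k * Dm) := by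
    intro k
    induction k with
    | zero =>
      intro ξ hξ
      refine (QLe.self hξ).mono ?_
      simpa using hDm ξ hξ
    | succ k ih =>
      intro ξ hξ
      have := step _ (by positivity) ih ξ hξ
      rwa [← mul_assoc, ← pow_succ'] at this
  intro ξ hξ
  refine QLe.lim fun ε hε => ?_
  have ht : Filter.Tendsto (fun k : ℕ => θ ^ k * Dm) Filter.atTop (nhds 0) := by
    simpa using (tendsto_pow_atTop_nhds_zero_of_lt_one hθ0 hθ1).mul_const Dm
  obtain ⟨k, hk⟩ := (ht.eventually_lt_const hε).exists
  refine (iter k ξ hξ).mono ?_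
  linarith

end Statements
end
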